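/- arXiv:2605.19483 — 5 statements merged into one kernel-verified Lean document; each statement's English description precedes it below -/
import Mathlib

section
/- Almost sure weak convergence of measure-valued martingales: Let S be a Polish space and (Ω, F, (F_n)_{n≥0}, P) a filtered probability space. Let (μ_n)_{n≥0} be a sequence of random Borel probability measures on S, adapted to (F_n), such that for every bounded continuous f : S → ℝ and every n ≥ 0, E[∫ f dμ_{n+1} | F_n] = ∫ f dμ_n almost surely (the conditional barycenter property). Then there exists a random Borel probability measure μ_∞ on S such that almost surely μ_n converges to μ_∞ in the topology of weak convergence of probability measures, and moreover E[∫ f dμ_∞] = E[∫ f dμ_0] for every bounded continuous f : S → ℝ. -/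
/-!
The barycenter of `μ 0` is a tight measure. Since the barycenter property passes from bounded
continuous test functions to indicators, `n ↦ μ n Kᶜ` is a nonnegative martingale for each compact
`K`, and Doob's maximal inequality bounds the probability that it ever exceeds `ε` by
`(barycenter of μ 0) Kᶜ / ε`. Hence almost every path `n ↦ μ n ω` is tight, so relatively compact by
Prokhorov. Outside a null set the bounded martingales `n ↦ ∫ f ∂(μ n ω)` converge for a countable
family of test functions `f` separating finite measures, so each such path has only one cluster
point, and therefore converges.
-/

open MeasureTheory Filter Topology BoundedContinuousFunction

/-- A random probability measure is a measurable map into `ProbabilityMeasure S`, where the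
latter carries the σ-algebra inherited from the space of measures (equivalently, the one
generated by the evaluation maps). -/
instance {S : Type*} [MeasurableSpace S] : MeasurableSpace (ProbabilityMeasure S) :=
  Subtype.instMeasurableSpace

open ProbabilityTheory Set
open scoped NNReal ENNReal

section RandomMeasure

variable {S : Type*} [MeasurableSpace S] {Ω : Type*} {mΩ : MeasurableSpace Ω} {P : Measure Ω}
  {κ : Ω → ProbabilityMeasure S} {E : Type*} [NormedAddCommGroup E] [NormedSpace ℝ E] {f : S → E}

/-- A random probability measure, seen as a Markov kernel. -/
noncomputable def randomMeasureKernel (κ : Ω → ProbabilityMeasure S) (hκ : Measurable κ) :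
    Kernel Ω S :=
  ⟨fun ω => (κ ω : Measure S), measurable_subtype_coe.comp hκ⟩

instance isMarkovKernel_randomMeasureKernel (hκ : Measurable κ) :
    IsMarkovKernel (randomMeasureKernel κ hκ) :=
  ⟨fun ω => (κ ω).2⟩

/-- The barycenter (or intensity) `A ↦ ∫⁻ ω, κ ω A ∂P` of a random probability measure `κ`. -/
noncomputable def barycenter (P : Measure Ω) (κ : Ω → ProbabilityMeasure S) : Measure S :=
  P.bind fun ω => (κ ω : Measure S)

instance isFiniteMeasure_barycenter [IsFiniteMeasure P] : IsFiniteMeasure (barycenter P κ) := by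
  refine ⟨(Measure.bind_apply_le _ MeasurableSet.univ).trans_lt ?_⟩
  simp

theorem integral_barycenter (hκ : Measurable κ) (hf : Integrable f (barycenter P κ)) :
    ∫ x, f x ∂(barycenter P κ) = ∫ ω, ∫ x, f x ∂(κ ω : Measure S) ∂P := by
  have hcomp : barycenter P κ = (randomMeasureKernel κ hκ ∘ₖ Kernel.const Unit P) () :=
    Measure.comp_eq_comp_const_apply (κ := randomMeasureKernel κ hκ)
  rw [hcomp] at hf ⊢
  exact Kernel.integral_comp hf

theorem stronglyMeasurable_integral_randomMeasure (hκ : Measurable κ) (hf : StronglyMeasurable f) :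
    StronglyMeasurable fun ω => ∫ x, f x ∂(κ ω : Measure S) :=
  hf.integral_kernel (κ := randomMeasureKernel κ hκ)

theorem norm_integral_le_of_norm_le {C : ℝ} (hC : ∀ x, ‖f x‖ ≤ C) (ρ : ProbabilityMeasure S) :
    ‖∫ x, f x ∂(ρ : Measure S)‖ ≤ C := by
  simpa using norm_integral_le_of_norm_le_const (μ := (ρ : Measure S)) (ae_of_all _ hC)

theorem integrable_integral_randomMeasure [IsFiniteMeasure P] (hκ : Measurable κ)
    (hf : StronglyMeasurable f) {C : ℝ} (hC : ∀ x, ‖f x‖ ≤ C) :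
    Integrable (fun ω => ∫ x, f x ∂(κ ω : Measure S)) P :=
  .of_bound (stronglyMeasurable_integral_randomMeasure hκ hf).aestronglyMeasurable C
    (ae_of_all _ fun ω => norm_integral_le_of_norm_le hC (κ ω))

end RandomMeasure

section SeparatingSequence

variable {S : Type*} [MeasurableSpace S] [TopologicalSpace S] [SecondCountableTopology S]
  [BorelSpace S]

variable (S) in
theorem exists_countable_isPiSystem_isClosed_generateFrom :
    ∃ C : Set (Set S), C.Countable ∧ (∀ s ∈ C, IsClosed s) ∧ univ ∈ C ∧ IsPiSystem C ∧
      ‹MeasurableSpace S› = MeasurableSpace.generateFrom C := by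
  let B : Set (Set S) := compl '' TopologicalSpace.countableBasis S
  have hB_closed : ∀ s ∈ B, IsClosed s := by
    rintro _ ⟨u, hu, rfl⟩
    exact (TopologicalSpace.isOpen_of_mem_countableBasis hu).isClosed_compl
  let C : Set (Set S) := sInter '' {t | t.Finite ∧ t ⊆ B}
  have hC_closed : ∀ s ∈ C, IsClosed s := by
    rintro _ ⟨t, ⟨-, htB⟩, rfl⟩
    exact isClosed_sInter fun s hs => hB_closed s (htB hs)
  refine ⟨C, ?_, hC_closed, ⟨∅, ⟨finite_empty, empty_subset B⟩, sInter_empty⟩, ?_, ?_⟩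
  · exact (countable_ofPred_finite_subset
      ((TopologicalSpace.countable_countableBasis S).image compl)).image sInter
  · rintro _ ⟨t, ⟨ht, htB⟩, rfl⟩ _ ⟨u, ⟨hu, huB⟩, rfl⟩ -
    exact ⟨t ∪ u, ⟨ht.union hu, union_subset htB huB⟩, sInter_union t u⟩
  · refine le_antisymm ?_
      (MeasurableSpace.generateFrom_le fun s hs => (hC_closed s hs).measurableSet)
    rw [BorelSpace.measurable_eq (α := S),
      (TopologicalSpace.isBasis_countableBasis S).borel_eq_generateFrom]
    refine MeasurableSpace.generateFrom_le fun u hu => MeasurableSet.of_compl ?_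
    refine MeasurableSpace.measurableSet_generateFrom
      ⟨{uᶜ}, ⟨finite_singleton _, ?_⟩, sInter_singleton _⟩
    exact singleton_subset_iff.2 (mem_image_of_mem compl hu)

variable (S) in
theorem exists_seq_boundedContinuous_separating_finiteMeasure [HasOuterApproxClosed S] :
    ∃ g : ℕ → S →ᵇ ℝ, ∀ ρ ν : Measure S, [IsFiniteMeasure ρ] → [IsFiniteMeasure ν] →
      (∀ i, ∫ x, g i x ∂ρ = ∫ x, g i x ∂ν) → ρ = ν := by
  obtain ⟨C, hC_countable, hC_closed, hC_univ, hC_pi, hC_gen⟩ :=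
    exists_countable_isPiSystem_isClosed_generateFrom S
  obtain ⟨c, rfl⟩ := hC_countable.exists_eq_range ⟨univ, hC_univ⟩
  have hc : ∀ k, IsClosed (c k) := fun k => hC_closed _ (mem_range_self k)
  let approx (k j : ℕ) : S →ᵇ ℝ :=
    ⟨⟨fun x => (hc k).apprSeq j x, NNReal.continuous_coe.comp ((hc k).apprSeq j).continuous⟩,
      ((hc k).apprSeq j).map_bounded'⟩
  refine ⟨fun i => approx i.unpair.1 i.unpair.2, fun ρ ν _ _ hint => ?_⟩
  have hlintegral (k j : ℕ) : ∫⁻ x, (hc k).apprSeq j x ∂ρ = ∫⁻ x, (hc k).apprSeq j x ∂ν := by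
    rw [lintegral_coe_eq_integral _ ((approx k j).integrable ρ),
      lintegral_coe_eq_integral _ ((approx k j).integrable ν)]
    have hkj := hint (Nat.pair k j)
    simp only [Nat.unpair_pair] at hkj
    exact congrArg ENNReal.ofReal hkj
  have heq (k : ℕ) : ρ (c k) = ν (c k) :=
    tendsto_nhds_unique (HasOuterApproxClosed.tendsto_lintegral_apprSeq (hc k) ρ)
      ((HasOuterApproxClosed.tendsto_lintegral_apprSeq (hc k) ν).congr
        fun j => (hlintegral k j).symm)
  obtain ⟨k₀, hk₀⟩ := hC_univ
  exact ext_of_generate_finite _ hC_gen hC_pi (forall_mem_range.2 heq) (hk₀ ▸ heq k₀)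

end SeparatingSequence

section WeakConvergence

variable {S : Type*} [MeasurableSpace S] [TopologicalSpace S] [BorelSpace S]

theorem exists_tendsto_of_isTightMeasureSet_of_forall_tendsto_integral [T2Space S]
    {ι α : Type*} {g : ι → S →ᵇ ℝ}
    (hg : ∀ ρ ρ' : ProbabilityMeasure S,
      (∀ i, ∫ x, g i x ∂(ρ : Measure S) = ∫ x, g i x ∂(ρ' : Measure S)) → ρ = ρ')
    {l : Filter α} [l.NeBot] {ν : α → ProbabilityMeasure S}
    (htight : IsTightMeasureSet (range fun a => (ν a : Measure S)))
    (hlim : ∀ i, ∃ c, Tendsto (fun a => ∫ x, g i x ∂(ν a : Measure S)) l (𝓝 c)) :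
    ∃ ρ, Tendsto ν l (𝓝 ρ) := by
  choose c hc using hlim
  have hcompact : IsCompact (closure (range ν)) :=
    isCompact_closure_of_isTightMeasureSet <| htight.subset <| by
      rintro _ ⟨_, ⟨a, rfl⟩, rfl⟩
      exact mem_range_self a
  have hmem : ∀ᶠ a in l, ν a ∈ closure (range ν) :=
    .of_forall fun a => subset_closure (mem_range_self a)
  have integral_eq {ρ : ProbabilityMeasure S} (hρ : MapClusterPt ρ l ν) (i : ι) :
      ∫ x, g i x ∂(ρ : Measure S) = c i := by
    have hcont := ProbabilityMeasure.continuous_integral_boundedContinuousFunction (g i)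
    exact eq_of_nhds_neBot (ClusterPt.mono (hρ.tendsto_comp (hcont.tendsto ρ)) (hc i))
  obtain ⟨ρ, -, hρ⟩ := hcompact.exists_mapClusterPt (tendsto_principal.2 hmem)
  exact ⟨ρ, hcompact.tendsto_nhds_of_unique_mapClusterPt hmem fun ρ' _ hρ' =>
    hg ρ' ρ fun i => (integral_eq hρ' i).trans (integral_eq hρ i).symm⟩

variable {Ω : Type*} {mΩ : MeasurableSpace Ω} {P : Measure Ω}

theorem measurable_probabilityMeasure_of_tendsto [HasOuterApproxClosed S] {ι : Type*}
    {l : Filter ι} [l.NeBot] [l.IsCountablyGenerated] {κ : ι → Ω → ProbabilityMeasure S}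
    (hκ : ∀ i, Measurable (κ i)) {ρ : Ω → ProbabilityMeasure S}
    (hlim : ∀ ω, Tendsto (fun i => κ i ω) l (𝓝 (ρ ω))) : Measurable ρ := by
  have hlintegral (f : S →ᵇ ℝ≥0) : Measurable fun ω => ∫⁻ x, f x ∂(ρ ω : Measure S) :=
    measurable_of_tendsto_metrizable' l
      (fun i => (Measure.measurable_lintegral f.continuous.measurable.coe_nnreal_ennreal).comp
        (measurable_subtype_coe.comp (hκ i)))
      (tendsto_pi_nhds.2 fun ω =>
        ProbabilityMeasure.tendsto_iff_forall_lintegral_tendsto.1 (hlim ω) f)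
  have hclosed (C : Set S) (hC : IsClosed C) : Measurable fun ω => (ρ ω : Measure S) C :=
    measurable_of_tendsto_metrizable (fun j => hlintegral (hC.apprSeq j))
      (tendsto_pi_nhds.2 fun ω => HasOuterApproxClosed.tendsto_lintegral_apprSeq hC _)
  refine Measurable.subtype_mk (f := fun ω => (ρ ω : Measure S)) ?_
  refine Measurable.measure_of_isPiSystem_of_isProbabilityMeasure ?_ isPiSystem_isClosed hclosed
  rw [BorelSpace.measurable_eq (α := S), borel_eq_generateFrom_isClosed]

theorem exists_measurable_ae_tendsto_probabilityMeasure [HasOuterApproxClosed S]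
    {κ : ℕ → Ω → ProbabilityMeasure S} (hκ : ∀ n, Measurable (κ n))
    (hlim : ∀ᵐ ω ∂P, ∃ ρ, Tendsto (fun n => κ n ω) atTop (𝓝 ρ)) :
    ∃ ρ : Ω → ProbabilityMeasure S, Measurable ρ ∧
      ∀ᵐ ω ∂P, Tendsto (fun n => κ n ω) atTop (𝓝 (ρ ω)) := by
  classical
  obtain ⟨G, hG_ae, hG_meas, hG_lim⟩ := hlim.exists_measurable_mem
  let κ' (n : ℕ) : Ω → ProbabilityMeasure S := G.piecewise (κ n) (κ 0)
  have hκ'_lim (ω : Ω) : ∃ ρ, Tendsto (fun n => κ' n ω) atTop (𝓝 ρ) := by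
    by_cases hω : ω ∈ G
    · simpa [κ', hω] using hG_lim ω hω
    · exact ⟨κ 0 ω, by simp [κ', hω]⟩
  choose ρ hρ using hκ'_lim
  refine ⟨ρ, measurable_probabilityMeasure_of_tendsto
    (fun n => (hκ n).piecewise hG_meas (hκ 0)) hρ, ?_⟩
  filter_upwards [hG_ae] with ω hω
  simpa [κ', hω] using hρ ω

theorem tendsto_integral_integral_of_ae_tendsto [IsFiniteMeasure P]
    {κ : ℕ → Ω → ProbabilityMeasure S} (hκ : ∀ n, Measurable (κ n)) {ρ : Ω → ProbabilityMeasure S}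
    (hlim : ∀ᵐ ω ∂P, Tendsto (fun n => κ n ω) atTop (𝓝 (ρ ω))) (f : S →ᵇ ℝ) :
    Tendsto (fun n => ∫ ω, ∫ x, f x ∂(κ n ω : Measure S) ∂P) atTop
      (𝓝 (∫ ω, ∫ x, f x ∂(ρ ω : Measure S) ∂P)) := by
  refine tendsto_integral_of_dominated_convergence (fun _ => ‖f‖) (fun n => ?_)
    (integrable_const _)
    (fun n => ae_of_all _ fun ω => norm_integral_le_of_norm_le f.norm_coe_le_norm _) ?_
  · exact (stronglyMeasurable_integral_randomMeasure (hκ n)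
      f.continuous.stronglyMeasurable).aestronglyMeasurable
  · filter_upwards [hlim] with ω hω
    exact ProbabilityMeasure.tendsto_iff_forall_integral_tendsto.1 hω f

end WeakConvergence

theorem mul_measure_exists_le_submartingale_le {Ω : Type*} {mΩ : MeasurableSpace Ω}
    {P : Measure Ω} [IsFiniteMeasure P] {F : Filtration ℕ mΩ} {M : ℕ → Ω → ℝ}
    (hM : Submartingale M F P) (hM_nonneg : 0 ≤ M) {C : ℝ} (hC : ∀ n, ∫ ω, M n ω ∂P ≤ C)
    (ε : ℝ≥0) : ε * P {ω | ∃ n, (ε : ℝ) ≤ M n ω} ≤ ENNReal.ofReal C := by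
  let A (n : ℕ) : Set Ω := {ω | (ε : ℝ) ≤
    (Finset.range (n + 1)).sup' Finset.nonempty_range_add_one fun k => M k ω}
  have mem_A {n : ℕ} {ω : Ω} : ω ∈ A n ↔ ∃ k ≤ n, (ε : ℝ) ≤ M k ω := by
    simp [A, Finset.le_sup'_iff]
  have hA_mono : Monotone A := fun m n hmn ω hω => by
    obtain ⟨k, hk, hεk⟩ := mem_A.1 hω
    exact mem_A.2 ⟨k, hk.trans hmn, hεk⟩
  have hA_iUnion : {ω | ∃ n, (ε : ℝ) ≤ M n ω} = ⋃ n, A n := by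
    ext ω
    simp only [mem_ofPred_eq, mem_iUnion, mem_A]
    exact ⟨fun ⟨n, hn⟩ => ⟨n, n, le_rfl, hn⟩, fun ⟨_, n, _, hn⟩ => ⟨n, hn⟩⟩
  rw [hA_iUnion, hA_mono.measure_iUnion, ENNReal.mul_iSup]
  refine iSup_le fun n => (maximal_ineq hM hM_nonneg n).trans (ENNReal.ofReal_le_ofReal ?_)
  exact (setIntegral_le_integral (hM.integrable n) (ae_of_all _ (hM_nonneg n))).trans (hC n)

/-- A measure-valued martingale: an adapted sequence of random probability measures with the
conditional barycenter property with respect to the filtration `F`, tested against bounded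
continuous functions. -/
structure IsMeasureValuedMartingale {S : Type*} [MeasurableSpace S] [TopologicalSpace S]
    {Ω : Type*} {mΩ : MeasurableSpace Ω} (μ : ℕ → Ω → ProbabilityMeasure S) (F : Filtration ℕ mΩ)
    (P : Measure Ω) : Prop where
  adapted : ∀ n, Measurable[F n] (μ n)
  condExp_integral : ∀ (f : S →ᵇ ℝ) (n : ℕ),
    P[fun ω => ∫ x, f x ∂(μ (n + 1) ω : Measure S) | F n]
      =ᵐ[P] fun ω => ∫ x, f x ∂(μ n ω : Measure S)

namespace IsMeasureValuedMartingale

variable {S : Type*} [MeasurableSpace S] [TopologicalSpace S] {Ω : Type*} {mΩ : MeasurableSpace Ω}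
  {P : Measure Ω} {F : Filtration ℕ mΩ} {μ : ℕ → Ω → ProbabilityMeasure S}

theorem measurable (h : IsMeasureValuedMartingale μ F P) (n : ℕ) : Measurable (μ n) :=
  (h.adapted n).mono (F.le n) le_rfl

variable [IsFiniteMeasure P]

theorem martingale_integral_boundedContinuous [OpensMeasurableSpace S]
    (h : IsMeasureValuedMartingale μ F P) (f : S →ᵇ ℝ) :
    Martingale (fun n ω => ∫ x, f x ∂(μ n ω : Measure S)) F P :=
  have hf : StronglyMeasurable f := f.continuous.stronglyMeasurable
  martingale_nat (fun n => stronglyMeasurable_integral_randomMeasure (h.adapted n) hf)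
    (fun n => integrable_integral_randomMeasure (h.measurable n) hf f.norm_coe_le_norm)
    fun n => (h.condExp_integral f n).symm

theorem integral_integral_eq [OpensMeasurableSpace S] (h : IsMeasureValuedMartingale μ F P)
    (f : S →ᵇ ℝ) (n : ℕ) :
    ∫ ω, ∫ x, f x ∂(μ n ω : Measure S) ∂P = ∫ ω, ∫ x, f x ∂(μ 0 ω : Measure S) ∂P := by
  simpa using ((h.martingale_integral_boundedContinuous f).setIntegral_eq (Nat.zero_le n)
    MeasurableSet.univ).symm

theorem ae_exists_tendsto_integral [OpensMeasurableSpace S] (h : IsMeasureValuedMartingale μ F P)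
    (f : S →ᵇ ℝ) :
    ∀ᵐ ω ∂P, ∃ c, Tendsto (fun n => ∫ x, f x ∂(μ n ω : Measure S)) atTop (𝓝 c) := by
  refine (h.martingale_integral_boundedContinuous f).submartingale.exists_ae_tendsto_of_bdd
    (R := (P univ).toNNReal * ‖f‖₊) fun n => ?_
  refine (eLpNorm_le_of_ae_bound
    (ae_of_all _ fun ω => norm_integral_le_of_norm_le f.norm_coe_le_norm (μ n ω))).trans ?_
  simp [enorm_eq_nnnorm]

section Barycenter

variable [BorelSpace S] [HasOuterApproxClosed S]

theorem barycenter_restrict_eq (h : IsMeasureValuedMartingale μ F P) {m n : ℕ} (hmn : m ≤ n)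
    {s : Set Ω} (hs : MeasurableSet[F m] s) :
    barycenter (P.restrict s) (μ m) = barycenter (P.restrict s) (μ n) := by
  refine ext_of_forall_integral_eq_of_IsFiniteMeasure fun f => ?_
  rw [integral_barycenter (h.measurable m) (f.integrable _),
    integral_barycenter (h.measurable n) (f.integrable _)]
  exact (h.martingale_integral_boundedContinuous f).setIntegral_eq hmn hs

theorem martingale_integral (h : IsMeasureValuedMartingale μ F P) {E : Type*}
    [NormedAddCommGroup E] [NormedSpace ℝ E] [CompleteSpace E] {f : S → E}
    (hf : StronglyMeasurable f) {C : ℝ} (hC : ∀ x, ‖f x‖ ≤ C) :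
    Martingale (fun n ω => ∫ x, f x ∂(μ n ω : Measure S)) F P := by
  refine martingale_of_setIntegral_eq_succ
    (fun n => stronglyMeasurable_integral_randomMeasure (h.adapted n) hf)
    (fun n => integrable_integral_randomMeasure (h.measurable n) hf hC) fun n s hs => ?_
  have hint (k : ℕ) : Integrable f (barycenter (P.restrict s) (μ k)) :=
    .of_bound hf.aestronglyMeasurable C (ae_of_all _ hC)
  rw [← integral_barycenter (h.measurable n) (hint n),
    ← integral_barycenter (h.measurable (n + 1)) (hint (n + 1)),
    h.barycenter_restrict_eq n.le_succ hs]

theorem mul_measure_exists_le_measureReal_le (h : IsMeasureValuedMartingale μ F P) {A : Set S}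
    (hA : MeasurableSet A) (ε : ℝ≥0) :
    ε * P {ω | ∃ n, (ε : ℝ) ≤ (μ n ω : Measure S).real A} ≤ barycenter P (μ 0) A := by
  have hind : StronglyMeasurable (A.indicator (1 : S → ℝ)) := stronglyMeasurable_one.indicator hA
  have hmart : Martingale (fun n ω => (μ n ω : Measure S).real A) F P := by
    simpa only [integral_indicator_one hA] using h.martingale_integral hind (C := 1)
      fun x => (norm_indicator_le_norm_self _ x).trans (by simp)
  have hmean (n : ℕ) :
      ∫ ω, (μ n ω : Measure S).real A ∂P = (barycenter P (μ 0)).real A := by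
    have hbary := h.barycenter_restrict_eq (Nat.zero_le n) MeasurableSet.univ
    rw [Measure.restrict_univ] at hbary
    have hint : Integrable (A.indicator (1 : S → ℝ)) (barycenter P (μ n)) :=
      (integrable_const 1).indicator hA
    simpa only [integral_indicator_one hA, hbary] using
      (integral_barycenter (h.measurable n) hint).symm
  calc ε * P {ω | ∃ n, (ε : ℝ) ≤ (μ n ω : Measure S).real A}
      ≤ ENNReal.ofReal ((barycenter P (μ 0)).real A) :=
        mul_measure_exists_le_submartingale_le hmart.submartingale
          (fun _ _ => measureReal_nonneg) (fun n => (hmean n).le) ε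
    _ = barycenter P (μ 0) A := ofReal_measureReal

theorem ae_exists_isCompact_measure_compl_le [T2Space S] (h : IsMeasureValuedMartingale μ F P)
    (htight : IsTightMeasureSet {barycenter P (μ 0)}) {ε : ℝ≥0} (hε : 0 < ε) :
    ∀ᵐ ω ∂P, ∃ K, IsCompact K ∧ ∀ n, (μ n ω : Measure S) Kᶜ ≤ ε := by
  rw [isTightMeasureSet_iff_exists_isCompact_measure_compl_le] at htight
  let bad : Set Ω := {ω | ¬∃ K, IsCompact K ∧ ∀ n, (μ n ω : Measure S) Kᶜ ≤ ε}
  suffices hbad : ε * P bad ≤ 0 by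
    rw [ae_iff]
    exact (mul_eq_zero.1 (nonpos_iff_eq_zero.1 hbad)).resolve_left (by simpa using hε.ne')
  refine le_of_forall_pos_le_add fun δ hδ => ?_
  obtain ⟨K, hK, hKδ⟩ := htight δ hδ
  have hsubset : bad ⊆ {ω | ∃ n, (ε : ℝ) ≤ (μ n ω : Measure S).real Kᶜ} := by
    intro ω hω
    obtain ⟨n, hn⟩ := not_forall.1 fun hK_le => hω ⟨K, hK, hK_le⟩
    exact ⟨n, by simpa [measureReal_def] using
      ENNReal.toReal_mono (measure_ne_top _ _) (not_le.1 hn).le⟩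
  calc ε * P bad
      ≤ ε * P {ω | ∃ n, (ε : ℝ) ≤ (μ n ω : Measure S).real Kᶜ} := by gcongr
    _ ≤ barycenter P (μ 0) Kᶜ :=
        h.mul_measure_exists_le_measureReal_le hK.measurableSet.compl ε
    _ ≤ 0 + δ := by simpa using hKδ

theorem ae_isTightMeasureSet_range [T2Space S] (h : IsMeasureValuedMartingale μ F P)
    (htight : IsTightMeasureSet {barycenter P (μ 0)}) :
    ∀ᵐ ω ∂P, IsTightMeasureSet (range fun n => (μ n ω : Measure S)) := by
  obtain ⟨u, -, hu_pos, hu_lim⟩ := exists_seq_strictAnti_tendsto (0 : ℝ≥0)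
  filter_upwards [ae_all_iff.2 fun k => h.ae_exists_isCompact_measure_compl_le htight (hu_pos k)]
    with ω hω
  refine isTightMeasureSet_iff_exists_isCompact_measure_compl_le.2 fun ε hε => ?_
  obtain ⟨k, hk⟩ := ((ENNReal.tendsto_coe.2 hu_lim).eventually_lt_const hε).exists
  obtain ⟨K, hK, hKu⟩ := hω k
  exact ⟨K, hK, forall_mem_range.2 fun n => (hKu n).trans hk.le⟩

theorem ae_exists_tendsto [T2Space S] [SecondCountableTopology S]
    (h : IsMeasureValuedMartingale μ F P) (htight : IsTightMeasureSet {barycenter P (μ 0)}) :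
    ∀ᵐ ω ∂P, ∃ ρ, Tendsto (fun n => μ n ω) atTop (𝓝 ρ) := by
  obtain ⟨g, hg⟩ := exists_seq_boundedContinuous_separating_finiteMeasure S
  filter_upwards [h.ae_isTightMeasureSet_range htight,
    ae_all_iff.2 fun i => h.ae_exists_tendsto_integral (g i)] with ω hω_tight hω_lim
  exact exists_tendsto_of_isTightMeasureSet_of_forall_tendsto_integral
    (fun ρ ρ' hint => Subtype.ext (hg (ρ : Measure S) (ρ' : Measure S) hint)) hω_tight hω_lim

end Barycenter

end IsMeasureValuedMartingale

theorem measure_valued_martingale_convergence_general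
    {S : Type*} [MeasurableSpace S] [TopologicalSpace S] [T2Space S] [SecondCountableTopology S]
    [HasOuterApproxClosed S] [BorelSpace S]
    {Ω : Type*} {mΩ : MeasurableSpace Ω} {P : Measure Ω} [IsFiniteMeasure P]
    {F : Filtration ℕ mΩ} {μ : ℕ → Ω → ProbabilityMeasure S}
    (h : IsMeasureValuedMartingale μ F P) (htight : IsTightMeasureSet {barycenter P (μ 0)}) :
    ∃ μinf : Ω → ProbabilityMeasure S, Measurable μinf ∧
      (∀ᵐ ω ∂P, Tendsto (fun n => μ n ω) atTop (𝓝 (μinf ω))) ∧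
      ∀ f : S →ᵇ ℝ,
        (∫ ω, (∫ x, f x ∂(μinf ω : Measure S)) ∂P)
          = ∫ ω, (∫ x, f x ∂(μ 0 ω : Measure S)) ∂P := by
  obtain ⟨μinf, hmeas, hlim⟩ :=
    exists_measurable_ae_tendsto_probabilityMeasure h.measurable (h.ae_exists_tendsto htight)
  refine ⟨μinf, hmeas, hlim, fun f => ?_⟩
  have hconv := tendsto_integral_integral_of_ae_tendsto h.measurable hlim f
  simp only [h.integral_integral_eq f] at hconv
  exact tendsto_nhds_unique hconv tendsto_const_nhds

/-- **Almost sure weak convergence of measure-valued martingales.**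
Let `S` be a Polish space and `(μ_n)` an adapted sequence of random Borel probability
measures on a filtered probability space satisfying the conditional barycenter property:
`E[∫ f dμ_{n+1} | F_n] = ∫ f dμ_n` a.s. for every bounded continuous `f`.  Then there is a
random Borel probability measure `μ_∞` such that almost surely `μ_n → μ_∞` weakly, and
moreover `E[∫ f dμ_∞] = E[∫ f dμ_0]` for every bounded continuous `f`. -/
theorem measure_valued_martingale_convergence
    {S : Type*} [MeasurableSpace S] [TopologicalSpace S] [PolishSpace S] [BorelSpace S]
    {Ω : Type*} {mΩ : MeasurableSpace Ω} (P : Measure Ω) [IsProbabilityMeasure P]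
    (F : Filtration ℕ mΩ)
    (μ : ℕ → Ω → ProbabilityMeasure S)
    (hadapt : ∀ n, Measurable[F n] (μ n))
    (hbary : ∀ (f : S →ᵇ ℝ) (n : ℕ),
      P[fun ω => ∫ x, f x ∂(μ (n + 1) ω : Measure S)|F n]
        =ᵐ[P] fun ω => ∫ x, f x ∂(μ n ω : Measure S)) :
    ∃ μinf : Ω → ProbabilityMeasure S, Measurable μinf ∧
      (∀ᵐ ω ∂P, Tendsto (fun n => μ n ω) atTop (𝓝 (μinf ω))) ∧
      ∀ f : S →ᵇ ℝ,
        (∫ ω, (∫ x, f x ∂(μinf ω : Measure S)) ∂P)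
          = ∫ ω, (∫ x, f x ∂(μ 0 ω : Measure S)) ∂P := by
  exact measure_valued_martingale_convergence_general ⟨hadapt, hbary⟩ isTightMeasureSet_singleton
end

section
/- An almost surely convergent time-homogeneous Feller Markov chain converges to an absorbing state: Let S be a Polish space and κ a Markov transition kernel on S that is Feller, i.e., the map x ↦ ∫ f(y) κ(x, dy) is continuous for every bounded continuous f : S → ℝ. Let (X_n)_{n≥0} be an S-valued stochastic process adapted to a filtration (F_n) such that P(X_{n+1} ∈ A | F_n) = κ(X_n, A) almost surely for every Borel set A ⊆ S and every n ≥ 0. If X_n converges almost surely to an S-valued random variable X_∞, then almost surely κ(X_∞, ·) = δ_{X_∞}, i.e., X_∞ is an absorbing state of the chain. -/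
open MeasureTheory ProbabilityTheory Filter Topology BoundedContinuousFunction

/-!
The pair `(X_n, X_{n+1})` has law `μ_n ⊗ₘ κ`, where `μ_n` is the law of `X_n`, and it converges to
`(X_∞, X_∞)`. For bounded continuous `f` and `g` we have `E[f(X_n) g(X_{n+1})] = E[(f · κ g)(X_n)]`,
where `f · κ g` is continuous by the Feller property, so this identity survives the limit: `κ` is
the conditional distribution of `X_∞` given `X_∞`. So is the identity kernel `x ↦ δ_x`, and
conditional distributions are almost surely unique.
-/

section Feller

variable {S T : Type*} [MeasurableSpace S] [TopologicalSpace S]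
  [MeasurableSpace T] [TopologicalSpace T]

theorem measurable_fst_mul_snd [OpensMeasurableSpace S] [OpensMeasurableSpace T]
    (f : S →ᵇ ℝ) (g : T →ᵇ ℝ) : Measurable fun p : S × T => f p.1 * g p.2 :=
  (f.continuous.measurable.comp measurable_fst).mul (g.continuous.measurable.comp measurable_snd)

/-- The Feller property of a kernel: integration against it maps bounded continuous functions to
continuous functions. -/
def IsFeller (κ : Kernel S T) : Prop :=
  ∀ g : T →ᵇ ℝ, Continuous fun x => ∫ y, g y ∂(κ x)

namespace IsFeller

variable [OpensMeasurableSpace T] {κ : Kernel S T} [IsFiniteKernel κ]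

/-- The Feller operator `g ↦ κ g` of a Feller kernel, acting on bounded continuous functions. -/
noncomputable def operator (hκ : IsFeller κ) (g : T →ᵇ ℝ) : S →ᵇ ℝ :=
  .ofNormedAddCommGroup (fun x => ∫ y, g y ∂(κ x)) (hκ g) (κ.bound.toReal * ‖g‖) fun x =>
    (g.norm_integral_le_mul_norm (κ x)).trans <| by
      gcongr
      exact ENNReal.toReal_mono κ.bound_ne_top (κ.measure_le_bound x Set.univ)

@[simp]
theorem operator_apply (hκ : IsFeller κ) (g : T →ᵇ ℝ) (x : S) :
    hκ.operator g x = ∫ y, g y ∂(κ x) :=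
  rfl

variable [OpensMeasurableSpace S]

theorem integral_mul_compProd (hκ : IsFeller κ) (μ : Measure S) [IsFiniteMeasure μ]
    (f : S →ᵇ ℝ) (g : T →ᵇ ℝ) :
    ∫ p, f p.1 * g p.2 ∂(μ ⊗ₘ κ) = ∫ x, (f * hκ.operator g) x ∂μ := by
  have hfg : Integrable (fun p : S × T => f p.1 * g p.2) (μ ⊗ₘ κ) :=
    .of_bound (measurable_fst_mul_snd f g).aestronglyMeasurable (‖f‖ * ‖g‖) <|
      ae_of_all _ fun p => (norm_mul_le _ _).trans <| by
        gcongr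
        exacts [f.norm_coe_le_norm _, g.norm_coe_le_norm _]
  rw [Measure.integral_compProd hfg]
  simp only [integral_const_mul, BoundedContinuousFunction.mul_apply, operator_apply]

theorem integral_mul_of_hasCondDistrib (hκ : IsFeller κ) {Ω : Type*} {mΩ : MeasurableSpace Ω}
    {P : Measure Ω} [IsFiniteMeasure P] {X : Ω → S} {Y : Ω → T} (h : HasCondDistrib Y X κ P)
    (f : S →ᵇ ℝ) (g : T →ᵇ ℝ) :
    ∫ ω, f (X ω) * g (Y ω) ∂P = ∫ ω, (f * hκ.operator g) (X ω) ∂P := by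
  calc ∫ ω, f (X ω) * g (Y ω) ∂P
    _ = ∫ p, f p.1 * g p.2 ∂(P.map fun ω => (X ω, Y ω)) :=
      (integral_map h.aemeasurable (measurable_fst_mul_snd f g).aestronglyMeasurable).symm
    _ = ∫ x, (f * hκ.operator g) x ∂(P.map X) := by rw [h.map_eq, hκ.integral_mul_compProd]
    _ = ∫ ω, (f * hκ.operator g) (X ω) ∂P := integral_map h.aemeasurable_fst (by fun_prop)

end IsFeller

end Feller

section CondDistrib

variable {Ω S T : Type*} [MeasurableSpace S] [MeasurableSpace T]
  {m mΩ : MeasurableSpace Ω} {P : Measure Ω} {X : Ω → S} {Y : Ω → T}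

theorem hasCondDistrib_of_condExp_ae_eq [IsFiniteMeasure P] {κ : Kernel S T} [IsFiniteKernel κ]
    (hm : m ≤ mΩ) (hX : Measurable[m] X) (hY : Measurable Y)
    (h : ∀ A, MeasurableSet A → P⟦Y ⁻¹' A | m⟧ =ᵐ[P] fun ω => (κ (X ω)).real A) :
    HasCondDistrib Y X κ P := by
  have hX' : Measurable X := hX.mono hm le_rfl
  refine ⟨(hX'.prodMk hY).aemeasurable, Measure.ext_prod fun {B A} hB hA => ?_⟩
  have hXB : MeasurableSet (X ⁻¹' B) := hX' hB
  have hreal : P.real (X ⁻¹' B ∩ Y ⁻¹' A) = (∫⁻ ω in X ⁻¹' B, κ (X ω) A ∂P).toReal :=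
    calc P.real (X ⁻¹' B ∩ Y ⁻¹' A)
      _ = ∫ ω in X ⁻¹' B, (Y ⁻¹' A).indicator (fun _ => (1 : ℝ)) ω ∂P := by
        rw [setIntegral_indicator (hY hA), setIntegral_one_eq_measureReal]
      _ = ∫ ω in X ⁻¹' B, (P⟦Y ⁻¹' A | m⟧) ω ∂P :=
        (setIntegral_condExp hm ((integrable_const 1).indicator (hY hA)) (hX hB)).symm
      _ = ∫ ω in X ⁻¹' B, (κ (X ω)).real A ∂P :=
        setIntegral_congr_ae hXB ((h A hA).mono fun _ hω _ => hω)
      _ = (∫⁻ ω in X ⁻¹' B, κ (X ω) A ∂P).toReal :=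
        integral_toReal ((κ.measurable_coe hA).comp hX').aemeasurable
          (ae_of_all _ fun _ => measure_lt_top _ _)
  have hfin : ∫⁻ ω in X ⁻¹' B, κ (X ω) A ∂P ≠ ⊤ :=
    ((lintegral_mono fun ω => κ.measure_le_bound (X ω) A).trans_lt <| by
      simpa using ENNReal.mul_lt_top κ.bound_lt_top (measure_lt_top P _)).ne
  rw [Measure.map_apply (hX'.prodMk hY) (hB.prod hA), Measure.compProd_apply_prod hB hA,
    setLIntegral_map hB (κ.measurable_coe hA) hX']
  exact (ENNReal.toReal_eq_toReal_iff' (measure_ne_top _ _) hfin).1 hreal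

theorem ae_eq_dirac_of_hasCondDistrib_self [IsFiniteMeasure P]
    [MeasurableSpace.CountableOrCountablyGenerated S S] {κ : Kernel S S} [IsFiniteKernel κ]
    (h : HasCondDistrib X X κ P) :
    ∀ᵐ ω ∂P, κ (X ω) = Measure.dirac (X ω) := by
  have hX : AEMeasurable X P := h.aemeasurable_fst
  have hlaw : P.map X ⊗ₘ κ = P.map X ⊗ₘ Kernel.id := by
    rw [← h.map_eq, Measure.compProd_id,
      AEMeasurable.map_map_of_aemeasurable measurable_diag.aemeasurable hX]
    rfl
  filter_upwards [ae_of_ae_map hX (Kernel.ae_eq_of_compProd_eq hlaw)] with ω hω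
  rw [hω, Kernel.id_apply]

end CondDistrib

section WeakLimit

variable {ι Ω' : Type*} {Ω : ι → Type*} {mΩ : ∀ i, MeasurableSpace (Ω i)}
  {P : ∀ i, Measure (Ω i)} [∀ i, IsProbabilityMeasure (P i)]
  {mΩ' : MeasurableSpace Ω'} {P' : Measure Ω'} [IsProbabilityMeasure P'] {l : Filter ι}

theorem tendsto_integral_comp_of_tendstoInDistribution
    {E : Type*} [MeasurableSpace E] [TopologicalSpace E] [OpensMeasurableSpace E]
    {X : ∀ i, Ω i → E} {Z : Ω' → E} (h : TendstoInDistribution X l Z P P') (f : E →ᵇ ℝ) :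
    Tendsto (fun i => ∫ ω, f (X i ω) ∂(P i)) l (𝓝 (∫ ω, f (Z ω) ∂P')) := by
  have hf {ν : Measure E} : AEStronglyMeasurable f ν := f.continuous.measurable.aestronglyMeasurable
  have hlim := ProbabilityMeasure.tendsto_iff_forall_integral_tendsto.1 h.tendsto f
  simpa only [ProbabilityMeasure.coe_mk, integral_map (h.forall_aemeasurable _) hf,
    integral_map h.aemeasurable_limit hf] using hlim

theorem IsFeller.hasCondDistrib_of_tendstoInDistribution
    {S T : Type*} [MeasurableSpace S] [TopologicalSpace S] [BorelSpace S] [HasOuterApproxClosed S]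
    [MeasurableSpace T] [TopologicalSpace T] [BorelSpace T] [HasOuterApproxClosed T]
    [OpensMeasurableSpace (S × T)] {κ : Kernel S T} [IsFiniteKernel κ] (hκ : IsFeller κ)
    [l.NeBot] {X : ∀ i, Ω i → S} {Y : ∀ i, Ω i → T} {X' : Ω' → S} {Y' : Ω' → T}
    (hXY : ∀ i, HasCondDistrib (Y i) (X i) κ (P i))
    (hlim : TendstoInDistribution (fun i ω => (X i ω, Y i ω)) l (fun ω => (X' ω, Y' ω)) P P') :
    HasCondDistrib Y' X' κ P' := by
  have hmeas : AEMeasurable (fun ω => (X' ω, Y' ω)) P' := hlim.aemeasurable_limit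
  refine ⟨hmeas, Measure.ext_of_integral_mul_boundedContinuousFunction fun f g => ?_⟩
  have hprod : Tendsto (fun i => ∫ ω, f (X i ω) * g (Y i ω) ∂(P i)) l
      (𝓝 (∫ ω, f (X' ω) * g (Y' ω) ∂P')) :=
    tendsto_integral_comp_of_tendstoInDistribution hlim
      (f.compContinuous .fst * g.compContinuous .snd)
  have hoperator : Tendsto (fun i => ∫ ω, (f * hκ.operator g) (X i ω) ∂(P i)) l
      (𝓝 (∫ ω, (f * hκ.operator g) (X' ω) ∂P')) :=
    tendsto_integral_comp_of_tendstoInDistribution hlim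
      ((f * hκ.operator g).compContinuous .fst)
  calc ∫ p, f p.1 * g p.2 ∂(P'.map fun ω => (X' ω, Y' ω))
    _ = ∫ ω, f (X' ω) * g (Y' ω) ∂P' :=
      integral_map hmeas (measurable_fst_mul_snd f g).aestronglyMeasurable
    _ = ∫ ω, (f * hκ.operator g) (X' ω) ∂P' :=
      tendsto_nhds_unique hprod <|
        hoperator.congr fun i => (hκ.integral_mul_of_hasCondDistrib (hXY i) f g).symm
    _ = ∫ x, (f * hκ.operator g) x ∂(P'.map X') := (integral_map hmeas.fst (by fun_prop)).symm
    _ = ∫ p, f p.1 * g p.2 ∂(P'.map X' ⊗ₘ κ) := (hκ.integral_mul_compProd _ f g).symm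

end WeakLimit

theorem feller_chain_converges_to_absorbing_state_general
    {S : Type*} [MeasurableSpace S] [TopologicalSpace S] [SecondCountableTopology S]
    [HasOuterApproxClosed S] [BorelSpace S]
    {Ω : Type*} {mΩ : MeasurableSpace Ω} {P : Measure Ω} [IsProbabilityMeasure P]
    {κ : Kernel S S} [IsFiniteKernel κ] (hκ : IsFeller κ) {X : ℕ → Ω → S}
    (hmarkov : ∀ n, HasCondDistrib (X (n + 1)) (X n) κ P)
    {Xinf : Ω → S} (hXinf : AEMeasurable Xinf P)
    (hconv : ∀ᵐ ω ∂P, Tendsto (fun n => X n ω) atTop (𝓝 (Xinf ω))) :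
    ∀ᵐ ω ∂P, κ (Xinf ω) = Measure.dirac (Xinf ω) := by
  have hpair : TendstoInDistribution (fun n ω => (X n ω, X (n + 1) ω)) atTop
      (fun ω => (Xinf ω, Xinf ω)) (fun _ => P) P :=
    tendstoInDistribution_of_ae_tendsto (fun n => (hmarkov n).aemeasurable)
      (hXinf.prodMk hXinf) <| hconv.mono fun ω hω =>
        hω.prodMk_nhds (hω.comp (tendsto_add_atTop_nat 1))
  exact ae_eq_dirac_of_hasCondDistrib_self
    (hκ.hasCondDistrib_of_tendstoInDistribution hmarkov hpair)

/-- **An almost surely convergent time-homogeneous Feller Markov chain converges to an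
absorbing state.**  Let `S` be a Polish space and `κ` a Feller Markov transition kernel on
`S`.  Let `(X_n)` be adapted to a filtration `(F_n)` with
`P(X_{n+1} ∈ A | F_n) = κ(X_n, A)` a.s. for every Borel `A`.  If `X_n → X_∞` almost surely,
then almost surely `κ(X_∞, ·) = δ_{X_∞}`, i.e. `X_∞` is an absorbing state. -/
theorem feller_chain_converges_to_absorbing_state
    {S : Type*} [MeasurableSpace S] [TopologicalSpace S] [PolishSpace S] [BorelSpace S]
    {Ω : Type*} {mΩ : MeasurableSpace Ω} (P : Measure Ω) [IsProbabilityMeasure P]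
    (κ : Kernel S S) [IsMarkovKernel κ]
    (hFeller : ∀ f : S →ᵇ ℝ, Continuous fun x => ∫ y, f y ∂(κ x))
    (F : Filtration ℕ mΩ)
    (X : ℕ → Ω → S)
    (hadapt : ∀ n, Measurable[F n] (X n))
    (hmarkov : ∀ (n : ℕ) (A : Set S), MeasurableSet A →
      P[fun ω => Set.indicator A (fun _ => (1 : ℝ)) (X (n + 1) ω)|F n]
        =ᵐ[P] fun ω => (κ (X n ω) A).toReal)
    (Xinf : Ω → S) (hXinf : Measurable Xinf)
    (hconv : ∀ᵐ ω ∂P, Tendsto (fun n => X n ω) atTop (𝓝 (Xinf ω))) :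
    ∀ᵐ ω ∂P, κ (Xinf ω) = Measure.dirac (Xinf ω) :=
  have hX n : Measurable (X n) := (hadapt n).mono (F.le n) le_rfl
  feller_chain_converges_to_absorbing_state_general hFeller
    (fun n => hasCondDistrib_of_condExp_ae_eq (F.le n) (hadapt n) (hX (n + 1)) (hmarkov n))
    hXinf.aemeasurable hconv
end

section
/- Hwang's theorem on concentration of Gibbs measures at global minima: Let V : ℝ^d → ℝ be twice continuously differentiable, attaining its global minimum value V* exactly at finitely many points m_1,…,m_ℓ, at each of which the Hessian ∇²V(m_k) is positive definite (in particular nonsingular). Assume lim inf_{|x|→∞} V(x) > V* and that ∫_{ℝ^d} e^{−V(x)/a₀} dx < ∞ for some a₀ > 0. For a ∈ (0, a₀], let π_a be the probability measure on ℝ^d with density proportional to e^{−V(x)/a}. Then, as a ↓ 0, π_a converges weakly to Σ_{k=1}^ℓ w_k δ_{m_k}, where the weight at m_k is w_k = (det ∇²V(m_k))^{−1/2} / Σ_{j=1}^ℓ (det ∇²V(m_j))^{−1/2}; in particular, the asymptotic probability mass at the global minimum m_k is proportional to (∏_{j=1}^d Λ_j^k)^{−1/2}, where Λ_1^k,…,Λ_d^k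 > 0 are the eigenvalues of ∇²V(m_k). -/
open MeasureTheory Filter Topology BoundedContinuousFunction Real

/-- The Hessian matrix of `V : ℝ^d → ℝ` at a point `m`, i.e. the matrix of the second
derivative bilinear form in the standard basis. -/
noncomputable def hessianMatrix {d : ℕ} (V : EuclideanSpace ℝ (Fin d) → ℝ)
    (m : EuclideanSpace ℝ (Fin d)) : Matrix (Fin d) (Fin d) ℝ :=
  fun i j => fderiv ℝ (fderiv ℝ V) m (EuclideanSpace.single i 1) (EuclideanSpace.single j 1)

/-!
Laplace's method. Near a minimum `m k` substitute `x = m k + √a • y`: the integrand of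
`a^(-d/2) * e^(v/a) * ∫ f * e^(-V/a)` tends to `f (m k) * e^(-(Hess V (m k)) y y / 2)` by Taylor's
formula, and quadratic growth of `V` provides a Gaussian dominating function. Away from the minima
`V ≥ v + δ`, so this region contributes `O(a^(-d/2) * e^(-δ/a))`. Hence the rescaled integral tends
to `(2π)^(d/2) * ∑ k, f (m k) / √det (Hess V (m k))`; in the quotient of this limit for `f` by the
one for `1`, both the rescaling and the power of `2π` cancel.
-/

open Asymptotics Module

section Taylor

variable {E F : Type*} [NormedAddCommGroup E] [NormedSpace ℝ E]
  [NormedAddCommGroup F] [NormedSpace ℝ F]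

theorem hasFDerivAt_half_smul_apply_self {B : E →L[ℝ] E →L[ℝ] F}
    (hB : ∀ v w, B v w = B w v) (x : E) :
    HasFDerivAt (fun y => (1 / 2 : ℝ) • B y y) (B x) x := by
  refine ((B.hasFDerivAt.clm_apply (hasFDerivAt_id x)).const_smul (1 / 2 : ℝ)).congr_fderiv ?_
  ext w
  change (1 / 2 : ℝ) • (B x w + B w x) = B x w
  rw [hB w x]
  module

theorem isLittleO_sub_taylor_two {f : E → F} {f' : E → E →L[ℝ] F} {f'' : E →L[ℝ] E →L[ℝ] F}
    {x : E} (hf : ∀ᶠ y in 𝓝 x, HasFDerivAt f (f' y) y) (hf' : HasFDerivAt f' f'' x) :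
    (fun h => f (x + h) - f x - f' x h - (1 / 2 : ℝ) • f'' h h) =o[𝓝 0] fun h => ‖h‖ ^ 2 := by
  have hsymm := second_derivative_symmetric_of_eventually_of_real hf hf'
  refine isLittleO_iff.2 fun ε hε => ?_
  have hadd : Tendsto (x + ·) (𝓝 0) (𝓝 x) := by
    simpa using (continuous_const_add x).tendsto 0
  obtain ⟨r, hr, hball⟩ := Metric.eventually_nhds_iff_ball.1
    ((hadd.eventually hf).and ((hasFDerivAt_iff_isLittleO_nhds_zero.1 hf').def hε))
  filter_upwards [Metric.ball_mem_nhds 0 hr] with h hh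
  have hsub : ∀ z ∈ Metric.closedBall (0 : E) ‖h‖, z ∈ Metric.ball (0 : E) r := fun z hz =>
    mem_ball_zero_iff.2 ((mem_closedBall_zero_iff.1 hz).trans_lt (mem_ball_zero_iff.1 hh))
  have hderiv : ∀ z ∈ Metric.closedBall (0 : E) ‖h‖,
      HasFDerivWithinAt (fun z => f (x + z) - f' x z - (1 / 2 : ℝ) • f'' z z)
        (f' (x + z) - f' x - f'' z) (Metric.closedBall 0 ‖h‖) z := fun z hz =>
    ((((hasFDerivAt_comp_add_left x).2 (hball z (hsub z hz)).1).sub (f' x).hasFDerivAt).sub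
      (hasFDerivAt_half_smul_apply_self hsymm z)).hasFDerivWithinAt
  have hbound : ∀ z ∈ Metric.closedBall (0 : E) ‖h‖, ‖f' (x + z) - f' x - f'' z‖ ≤ ε * ‖h‖ :=
    fun z hz => (hball z (hsub z hz)).2.trans (by gcongr; exact mem_closedBall_zero_iff.1 hz)
  have hmv := (convex_closedBall (0 : E) ‖h‖).norm_image_sub_le_of_norm_hasFDerivWithin_le
    hderiv hbound (Metric.mem_closedBall_self (norm_nonneg h)) (by simp : h ∈ _)
  calc ‖f (x + h) - f x - f' x h - (1 / 2 : ℝ) • f'' h h‖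
      = ‖f (x + h) - f' x h - (1 / 2 : ℝ) • f'' h h
          - (f (x + 0) - f' x 0 - (1 / 2 : ℝ) • f'' 0 0)‖ := by
        congr 1
        simp only [add_zero, map_zero, smul_zero, sub_zero]
        abel
    _ ≤ ε * ‖h‖ * ‖h - 0‖ := hmv
    _ = ε * ‖‖h‖ ^ 2‖ := by rw [sub_zero, norm_pow, norm_norm]; ring

end Taylor

section MorseMin

variable {E : Type*} [NormedAddCommGroup E] [NormedSpace ℝ E]

theorem isCoercive_of_forall_pos [FiniteDimensional ℝ E] {B : E →L[ℝ] E →L[ℝ] ℝ}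
    (hB : ∀ y, y ≠ 0 → 0 < B y y) : IsCoercive B := by
  obtain ⟨C, hC, hCB⟩ := (isCompact_sphere (0 : E) 1).exists_forall_le' (f := fun y => B y y)
    (a := 0) (by fun_prop) fun y hy => hB y (ne_zero_of_mem_unit_sphere ⟨y, hy⟩)
  refine ⟨C, hC, fun y => ?_⟩
  rcases eq_or_ne y 0 with rfl | hy
  · simp
  have hnorm : ‖y‖ ≠ 0 := norm_ne_zero_iff.2 hy
  have hunit : C ≤ B (‖y‖⁻¹ • y) (‖y‖⁻¹ • y) :=
    hCB _ (by simp [norm_smul, inv_mul_cancel₀ hnorm])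
  calc C * ‖y‖ * ‖y‖ ≤ B (‖y‖⁻¹ • y) (‖y‖⁻¹ • y) * ‖y‖ * ‖y‖ := by gcongr
    _ = B y y := by
      simp only [map_smul, _root_.smul_apply, smul_eq_mul]
      field_simp

/-- `V` has a nondegenerate minimum at `m` with Hessian form `H`, in the sense of Peano:
`V (m + y) = V m + H y y / 2 + o(‖y‖²)` with `H` coercive. This is all the regularity of `V`
that Laplace's method uses. -/
structure HasMorseMinAt (V : E → ℝ) (H : E →L[ℝ] E →L[ℝ] ℝ) (m : E) : Prop where
  isLittleO : (fun y => V (m + y) - V m - 1 / 2 * H y y) =o[𝓝 0] fun y => ‖y‖ ^ 2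
  isCoercive : IsCoercive H

theorem hasMorseMinAt_of_isLocalMin [FiniteDimensional ℝ E] {V : E → ℝ} {m : E}
    (hmin : IsLocalMin V m) (hV : ∀ᶠ x in 𝓝 m, DifferentiableAt ℝ V x)
    (hV' : DifferentiableAt ℝ (fderiv ℝ V) m)
    (hpos : ∀ y, y ≠ 0 → 0 < fderiv ℝ (fderiv ℝ V) m y y) :
    HasMorseMinAt V (fderiv ℝ (fderiv ℝ V) m) m where
  isLittleO := by
    simpa [hmin.fderiv_eq_zero] using
      isLittleO_sub_taylor_two (hV.mono fun _ hx => hx.hasFDerivAt) hV'.hasFDerivAt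
  isCoercive := isCoercive_of_forall_pos hpos

namespace HasMorseMinAt

variable {V : E → ℝ} {H : E →L[ℝ] E →L[ℝ] ℝ} {m : E}

theorem exists_eventually_mul_norm_sq_le (h : HasMorseMinAt V H m) :
    ∃ κ > 0, ∀ᶠ x in 𝓝 m, κ * ‖x - m‖ ^ 2 ≤ V x - V m := by
  obtain ⟨C, hC, hCH⟩ := h.isCoercive
  refine ⟨C / 4, by positivity, ?_⟩
  have hsub : Tendsto (· - m) (𝓝 m) (𝓝 0) := by
    simpa using (continuous_sub_right m).tendsto m
  filter_upwards [hsub.eventually (h.isLittleO.def (by positivity : 0 < C / 4))] with x hx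
  rw [add_sub_cancel, norm_pow, norm_norm] at hx
  linarith [(abs_le.1 hx).1, hCH (x - m)]

theorem tendsto_rescale (h : HasMorseMinAt V H m) (y : E) :
    Tendsto (fun a : ℝ => (V (m + √a • y) - V m) / a) (𝓝[>] 0) (𝓝 (1 / 2 * H y y)) := by
  have hsmul : Tendsto (fun a : ℝ => √a • y) (𝓝[>] 0) (𝓝 0) := by
    have hcont : Continuous fun a : ℝ => √a • y := by fun_prop
    simpa using (hcont.tendsto 0).mono_left nhdsWithin_le_nhds
  have hpos : ∀ᶠ a : ℝ in 𝓝[>] 0, 0 < a := self_mem_nhdsWithin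
  have hbigO : (fun a : ℝ => ‖√a • y‖ ^ 2) =O[𝓝[>] 0] fun a => a :=
    .of_bound (‖y‖ ^ 2) <| hpos.mono fun a ha => by
      rw [norm_smul, mul_pow, norm_of_nonneg (sqrt_nonneg a), sq_sqrt ha.le,
        norm_of_nonneg (by positivity), norm_of_nonneg ha.le, mul_comm]
  have hlim := ((h.isLittleO.comp_tendsto hsmul).trans_isBigO hbigO).tendsto_div_nhds_zero
  refine (zero_add (1 / 2 * H y y) ▸ hlim.add_const (1 / 2 * H y y)).congr' ?_
  filter_upwards [hpos] with a ha
  have hquad : H (√a • y) (√a • y) = a * H y y := by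
    simp only [map_smul, _root_.smul_apply, smul_eq_mul, ← mul_assoc,
      mul_self_sqrt ha.le]
  simp only [Function.comp_apply, hquad]
  field_simp
  ring

end HasMorseMinAt

end MorseMin

section Separation

open scoped Function in
theorem exists_pairwise_disjoint_isOpen_subset {ι X : Type*} [Finite ι] [TopologicalSpace X]
    [T2Space X] {m : ι → X} (hm : Function.Injective m) {N : ι → Set X} (hN : ∀ k, N k ∈ 𝓝 (m k)) :
    ∃ U : ι → Set X, (∀ k, IsOpen (U k) ∧ m k ∈ U k ∧ U k ⊆ N k) ∧ Pairwise (Disjoint on U) := by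
  have hdisj : Pairwise (Disjoint on fun k => 𝓝 (m k)) := fun i j hij =>
    disjoint_nhds_nhds.2 (hm.ne hij)
  obtain ⟨U, hU, hUd⟩ := hdisj.exists_mem_filter_basis_of_disjoint
    fun k => (nhds_basis_opens (m k)).restrict_subset (hN k)
  exact ⟨U, fun k => ⟨(hU k).1.2, (hU k).1.1, (hU k).2⟩, hUd⟩

theorem exists_pos_add_le_of_lowerSemicontinuous {X : Type*} [TopologicalSpace X] {V : X → ℝ}
    (hV : LowerSemicontinuous V) {v c : ℝ} (hc : v < c) (hcV : ∀ᶠ x in cocompact X, c ≤ V x)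
    {U : Set X} (hU : IsOpen U) (hUV : ∀ x ∉ U, v < V x) :
    ∃ δ > 0, ∀ x ∉ U, v + δ ≤ V x := by
  obtain ⟨K, hK, hKc⟩ := mem_cocompact.1 hcV
  suffices ∃ b > v, ∀ x ∈ K \ U, b ≤ V x by
    obtain ⟨b, hb, hbV⟩ := this
    refine ⟨min b c - v, sub_pos.2 (lt_min hb hc), fun x hxU => ?_⟩
    rw [add_sub_cancel]
    by_cases hxK : x ∈ K
    · exact (min_le_left b c).trans (hbV x ⟨hxK, hxU⟩)
    · exact (min_le_right b c).trans (hKc hxK)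
  rcases (K \ U).eq_empty_or_nonempty with hKU | hKU
  · exact ⟨c, hc, by simp [hKU]⟩
  · obtain ⟨x₀, hx₀, hmin⟩ := (hV.lowerSemicontinuousOn _).exists_isMinOn hKU (hK.diff hU)
    exact ⟨V x₀, hUV x₀ hx₀.2, isMinOn_iff.1 hmin⟩

end Separation

section GaussianIntegral

variable {E F : Type*} [NormedAddCommGroup E] [NormedSpace ℝ E] [FiniteDimensional ℝ E]
  [MeasurableSpace E] [BorelSpace E] [NormedAddCommGroup F] [NormedSpace ℝ F]
  (μ : Measure E) [μ.IsAddHaarMeasure]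

theorem integral_comp_add_smul (g : E → F) (m : E) {r : ℝ} (hr : 0 ≤ r) :
    ∫ y, g (m + r • y) ∂μ = (r ^ finrank ℝ E)⁻¹ • ∫ x, g x ∂μ := by
  rw [Measure.integral_comp_smul_of_nonneg μ (fun z => g (m + z)) r (hR := hr),
    integral_add_left_eq_self]

theorem integral_comp_linearMap {f : E →ₗ[ℝ] E} (hf : LinearMap.det f ≠ 0) (g : E → F) :
    ∫ x, g (f x) ∂μ = |LinearMap.det f|⁻¹ • ∫ x, g x ∂μ := by
  have hemb : MeasurableEmbedding f :=
    (f.equivOfDetNeZero hf).toContinuousLinearEquiv.toHomeomorph.measurableEmbedding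
  rw [← hemb.integral_map, μ.map_linearMap_addHaar_eq_smul_addHaar hf, integral_smul_measure,
    ENNReal.toReal_ofReal (abs_nonneg _), abs_inv]

theorem integrable_exp_neg_mul_norm_sq {b : ℝ} (hb : 0 < b) :
    Integrable (fun y : E => exp (-b * ‖y‖ ^ 2)) μ := by
  rcases subsingleton_or_nontrivial E with hE | hE
  · have hcont : Continuous fun y : E => exp (-b * ‖y‖ ^ 2) := by fun_prop
    exact integrableOn_univ.1 (hcont.continuousOn.integrableOn_compact isCompact_univ)
  · refine (integrable_fun_norm_addHaar μ (f := fun t => exp (-b * t ^ 2))).2 ?_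
    have hs : (-1 : ℝ) < (finrank ℝ E - 1 : ℕ) := by
      linarith [(finrank ℝ E - 1).cast_nonneg (α := ℝ)]
    simpa [rpow_natCast] using integrableOn_rpow_mul_exp_neg_mul_sq hb hs

theorem integrable_exp_neg_half_of_isCoercive {B : E →L[ℝ] E →L[ℝ] ℝ} (hB : IsCoercive B) :
    Integrable (fun y => exp (-(1 / 2) * B y y)) μ := by
  obtain ⟨C, hC, hCB⟩ := hB
  refine (integrable_exp_neg_mul_norm_sq μ (half_pos hC)).mono' (by fun_prop)
    (.of_forall fun y => ?_)
  rw [norm_of_nonneg (exp_pos _).le]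
  exact exp_le_exp.2 (by linarith [hCB y])

end GaussianIntegral

section Matrix

variable {ι : Type*} [Fintype ι]

open scoped MatrixOrder in
theorem exists_eq_transpose_mul_self_of_posSemidef {A : Matrix ι ι ℝ} (hA : A.PosSemidef) :
    ∃ B : Matrix ι ι ℝ, A = B.transpose * B := by
  classical
  obtain ⟨B, hB⟩ := CStarAlgebra.nonneg_iff_eq_star_mul_self.1 hA.nonneg
  exact ⟨B, by simpa [Matrix.star_eq_conjTranspose] using hB⟩

variable [DecidableEq ι]

open Matrix in
theorem norm_toLpLin_sq (B : Matrix ι ι ℝ) (y : EuclideanSpace ℝ ι) :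
    ‖B.toLpLin 2 2 y‖ ^ 2 = y.ofLp ⬝ᵥ (Bᵀ * B) *ᵥ y.ofLp := by
  rw [← Matrix.mulVec_mulVec, Matrix.dotProduct_mulVec, Matrix.vecMul_transpose,
    EuclideanSpace.real_norm_sq_eq]
  simp [dotProduct, Matrix.toLpLin_apply, sq]

open Matrix in
theorem integral_exp_neg_half_dotProduct_mulVec {A : Matrix ι ι ℝ} (hA : A.PosDef) :
    ∫ y : EuclideanSpace ℝ ι, exp (-(1 / 2) * (y.ofLp ⬝ᵥ A *ᵥ y.ofLp)) =
      (√A.det)⁻¹ * (2 * π) ^ (Fintype.card ι / 2 : ℝ) := by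
  obtain ⟨B, rfl⟩ := exists_eq_transpose_mul_self_of_posSemidef hA.posSemidef
  have hdet : (Bᵀ * B).det = B.det ^ 2 := by rw [Matrix.det_mul, Matrix.det_transpose, sq]
  have hBdet : LinearMap.det (B.toLpLin 2 2) ≠ 0 := by
    rw [LinearMap.det_toLpLin]
    exact (pow_ne_zero_iff two_ne_zero).1 (hdet ▸ hA.det_pos.ne')
  calc ∫ y : EuclideanSpace ℝ ι, exp (-(1 / 2) * (y.ofLp ⬝ᵥ (Bᵀ * B) *ᵥ y.ofLp))
      = ∫ y, exp (-(1 / 2) * ‖B.toLpLin 2 2 y‖ ^ 2) := by simp_rw [norm_toLpLin_sq]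
    _ = |LinearMap.det (B.toLpLin 2 2)|⁻¹ * ∫ y : EuclideanSpace ℝ ι, exp (-(1 / 2) * ‖y‖ ^ 2) :=
      integral_comp_linearMap volume hBdet fun y => exp (-(1 / 2) * ‖y‖ ^ 2)
    _ = (√(Bᵀ * B).det)⁻¹ * (2 * π) ^ (Fintype.card ι / 2 : ℝ) := by
      rw [hdet, sqrt_sq_eq_abs, LinearMap.det_toLpLin,
        GaussianFourier.integral_rexp_neg_mul_sq_norm (by norm_num), finrank_euclideanSpace]
      congr 3
      ring

end Matrix

section Tail

variable {M w a a₀ : ℝ}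

theorem exp_neg_div_le {t : ℝ} (ha : 0 < a) (haa₀ : a ≤ a₀) (hwt : w ≤ t) :
    exp (-t / a) ≤ exp (-w / a) * (exp (w / a₀) * exp (-t / a₀)) := by
  rw [← exp_add, ← exp_add, exp_le_exp]
  have hinv : 0 ≤ a⁻¹ - a₀⁻¹ := sub_nonneg.2 (inv_anti₀ ha haa₀)
  have hmul : w * (a⁻¹ - a₀⁻¹) ≤ t * (a⁻¹ - a₀⁻¹) := by gcongr
  simp only [div_eq_mul_inv]
  linarith

theorem norm_mul_exp_neg_div_le {b t : ℝ} (ha : 0 < a) (haa₀ : a ≤ a₀) (hwt : w ≤ t)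
    (hb : |b| ≤ M) :
    ‖b * exp (-t / a)‖ ≤ exp (-w / a) * (M * exp (w / a₀)) * exp (-t / a₀) :=
  calc ‖b * exp (-t / a)‖ = |b| * exp (-t / a) := by
        rw [norm_mul, norm_eq_abs, norm_of_nonneg (exp_pos _).le]
    _ ≤ M * (exp (-w / a) * (exp (w / a₀) * exp (-t / a₀))) :=
        mul_le_mul hb (exp_neg_div_le ha haa₀ hwt) (exp_pos _).le ((abs_nonneg _).trans hb)
    _ = exp (-w / a) * (M * exp (w / a₀)) * exp (-t / a₀) := by ring

variable {X : Type*} [MeasurableSpace X] {μ : Measure X} {V f : X → ℝ}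

theorem integrable_mul_exp_neg_div (hV : Measurable V) (hf : Measurable f) (hM : ∀ x, |f x| ≤ M)
    (hwV : ∀ x, w ≤ V x) (ha : 0 < a) (haa₀ : a ≤ a₀)
    (hint : Integrable (fun x => exp (-V x / a₀)) μ) :
    Integrable (fun x => f x * exp (-V x / a)) μ :=
  (hint.const_mul _).mono' (by fun_prop)
    (.of_forall fun x => norm_mul_exp_neg_div_le ha haa₀ (hwV x) (hM x))

theorem norm_setIntegral_mul_exp_neg_div_le {s : Set X} (hs : MeasurableSet s)
    (hM : ∀ x ∈ s, |f x| ≤ M) (hwV : ∀ x ∈ s, w ≤ V x) (ha : 0 < a) (haa₀ : a ≤ a₀)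
    (hint : IntegrableOn (fun x => exp (-V x / a₀)) s μ) :
    ‖∫ x in s, f x * exp (-V x / a) ∂μ‖ ≤
      exp (-w / a) * (M * exp (w / a₀)) * ∫ x in s, exp (-V x / a₀) ∂μ := by
  rw [← integral_const_mul]
  exact norm_integral_le_of_norm_le (hint.const_mul _) <| (ae_restrict_mem hs).mono
    fun x hx => norm_mul_exp_neg_div_le ha haa₀ (hwV x hx) (hM x hx)

/-- The normalisation `a^(-n/2) * e^(v/a)` of Laplace's method in dimension `n` at the minimum
value `v`: it multiplies `∫ e^(-V/a)` to a quantity with a finite positive limit as `a ↓ 0`. -/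
noncomputable def laplaceFactor (n : ℕ) (v a : ℝ) : ℝ :=
  (√a ^ n)⁻¹ * exp (v / a)

theorem laplaceFactor_pos (n : ℕ) (v : ℝ) (ha : 0 < a) : 0 < laplaceFactor n v a := by
  unfold laplaceFactor
  positivity

theorem tendsto_laplaceFactor_mul_exp_neg_div (n : ℕ) {v : ℝ} (hvw : v < w) :
    Tendsto (fun a => laplaceFactor n v a * exp (-w / a)) (𝓝[>] 0) (𝓝 0) := by
  refine ((tendsto_rpow_mul_exp_neg_mul_atTop_nhds_zero (n / 2) (w - v) (sub_pos.2 hvw)).comp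
    tendsto_inv_nhdsGT_zero).congr' ?_
  filter_upwards [self_mem_nhdsWithin] with a ha
  have hpow : a⁻¹ ^ (n / 2 : ℝ) = (√a ^ n)⁻¹ := by
    rw [rpow_div_two_eq_sqrt _ (inv_nonneg.2 (le_of_lt ha)), sqrt_inv, rpow_natCast, inv_pow]
  rw [Function.comp_apply, hpow, laplaceFactor, mul_assoc, ← exp_add]
  ring_nf

theorem tendsto_laplaceFactor_mul_setIntegral_zero (n : ℕ) {v : ℝ} (hvw : v < w) {s : Set X}
    (hs : MeasurableSet s) (hM : ∀ x ∈ s, |f x| ≤ M) (hwV : ∀ x ∈ s, w ≤ V x) (ha₀ : 0 < a₀)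
    (hint : IntegrableOn (fun x => exp (-V x / a₀)) s μ) :
    Tendsto (fun a => laplaceFactor n v a * ∫ x in s, f x * exp (-V x / a) ∂μ)
      (𝓝[>] 0) (𝓝 0) := by
  have hlim := (tendsto_laplaceFactor_mul_exp_neg_div n hvw).mul_const
    (M * exp (w / a₀) * ∫ x in s, exp (-V x / a₀) ∂μ)
  rw [zero_mul] at hlim
  refine squeeze_zero_norm' ?_ hlim
  filter_upwards [Ioc_mem_nhdsGT ha₀] with a ⟨ha, haa₀⟩
  have hpos := laplaceFactor_pos n v ha
  calc ‖laplaceFactor n v a * ∫ x in s, f x * exp (-V x / a) ∂μ‖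
      = laplaceFactor n v a * ‖∫ x in s, f x * exp (-V x / a) ∂μ‖ := by
        rw [norm_mul, norm_of_nonneg hpos.le]
    _ ≤ laplaceFactor n v a *
          (exp (-w / a) * (M * exp (w / a₀)) * ∫ x in s, exp (-V x / a₀) ∂μ) := by
        gcongr
        exact norm_setIntegral_mul_exp_neg_div_le hs hM hwV ha haa₀ hint
    _ = laplaceFactor n v a * exp (-w / a) *
          (M * exp (w / a₀) * ∫ x in s, exp (-V x / a₀) ∂μ) := by ring

end Tail

section Laplace

theorem norm_indicator_mul_exp_neg_div_le {E : Type*} [NormedAddCommGroup E] [NormedSpace ℝ E]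
    {V f : E → ℝ} {M κ a : ℝ} {U : Set E} {m : E} (hUκ : ∀ x ∈ U, κ * ‖x - m‖ ^ 2 ≤ V x - V m)
    (hM : ∀ x, |f x| ≤ M) (ha : 0 < a) (y : E) :
    ‖U.indicator (fun x => f x * exp (-(V x - V m) / a)) (m + √a • y)‖ ≤
      M * exp (-κ * ‖y‖ ^ 2) := by
  have hM₀ : 0 ≤ M := (abs_nonneg _).trans (hM m)
  by_cases hy : m + √a • y ∈ U
  · have hquad : κ * ‖y‖ ^ 2 * a ≤ V (m + √a • y) - V m := by
      have hle := hUκ _ hy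
      rw [add_sub_cancel_left, norm_smul, mul_pow, norm_of_nonneg (sqrt_nonneg a),
        sq_sqrt ha.le] at hle
      linarith
    rw [Set.indicator_of_mem hy, norm_mul, norm_eq_abs, norm_of_nonneg (exp_pos _).le]
    gcongr
    · exact hM _
    · rw [neg_div, neg_mul]
      exact neg_le_neg ((le_div_iff₀ ha).2 hquad)
  · rw [Set.indicator_of_notMem hy, norm_zero]
    positivity

variable {E : Type*} [NormedAddCommGroup E] [NormedSpace ℝ E] [FiniteDimensional ℝ E]
  [MeasurableSpace E] [BorelSpace E] (μ : Measure E) [μ.IsAddHaarMeasure]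
  {V f : E → ℝ} {M : ℝ}

theorem laplaceFactor_mul_setIntegral {U : Set E} (hU : MeasurableSet U) (m : E) (a : ℝ) :
    laplaceFactor (finrank ℝ E) (V m) a * ∫ x in U, f x * exp (-V x / a) ∂μ =
      ∫ y, U.indicator (fun x => f x * exp (-(V x - V m) / a)) (m + √a • y) ∂μ := by
  have hshift : ∀ x, exp (V m / a) * (f x * exp (-V x / a)) = f x * exp (-(V x - V m) / a) :=
    fun x => by rw [mul_left_comm, ← exp_add]; ring_nf
  rw [integral_comp_add_smul μ _ m (sqrt_nonneg a), integral_indicator hU, smul_eq_mul,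
    laplaceFactor, mul_assoc, ← integral_const_mul]
  simp_rw [hshift]

namespace HasMorseMinAt

variable {H : E →L[ℝ] E →L[ℝ] ℝ} {m : E}

theorem tendsto_laplaceFactor_mul_setIntegral (h : HasMorseMinAt V H m) {U : Set E}
    (hU : MeasurableSet U) (hUm : U ∈ 𝓝 m) {κ : ℝ} (hκ : 0 < κ)
    (hUκ : ∀ x ∈ U, κ * ‖x - m‖ ^ 2 ≤ V x - V m)
    (hV : Measurable V) (hf : Measurable f) (hM : ∀ x, |f x| ≤ M) (hfm : ContinuousAt f m) :
    Tendsto (fun a => laplaceFactor (finrank ℝ E) (V m) a * ∫ x in U, f x * exp (-V x / a) ∂μ)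
      (𝓝[>] 0) (𝓝 (f m * ∫ y, exp (-(1 / 2) * H y y) ∂μ)) := by
  simp_rw [laplaceFactor_mul_setIntegral μ hU, ← integral_const_mul]
  refine tendsto_integral_filter_of_dominated_convergence (fun y => M * exp (-κ * ‖y‖ ^ 2))
    ?meas ?bound ((integrable_exp_neg_mul_norm_sq μ hκ).const_mul M) ?lim
  case meas =>
    have hmeas : ∀ a : ℝ, Measurable (U.indicator fun x => f x * exp (-(V x - V m) / a)) :=
      fun a => Measurable.indicator (by fun_prop) hU
    exact .of_forall fun a => ((hmeas a).comp (by fun_prop)).aestronglyMeasurable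
  case bound =>
    filter_upwards [self_mem_nhdsWithin] with a ha
    exact .of_forall fun y => norm_indicator_mul_exp_neg_div_le hUκ hM ha y
  case lim =>
    refine .of_forall fun y => ?_
    have hpath : Tendsto (fun a : ℝ => m + √a • y) (𝓝[>] 0) (𝓝 m) := by
      have hcont : Continuous fun a : ℝ => m + √a • y := by fun_prop
      simpa using (hcont.tendsto 0).mono_left nhdsWithin_le_nhds
    have hexp := (h.tendsto_rescale y).neg.rexp
    rw [← neg_mul] at hexp
    refine ((hfm.tendsto.comp hpath).mul hexp).congr' ?_
    filter_upwards [hpath.eventually hUm] with a ha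
    rw [Set.indicator_of_mem ha, Function.comp_apply, neg_div]

theorem integral_pos (h : HasMorseMinAt V H m) : 0 < ∫ y, exp (-(1 / 2) * H y y) ∂μ :=
  integral_exp_pos (integrable_exp_neg_half_of_isCoercive μ h.isCoercive)

end HasMorseMinAt

variable {ι : Type*} [Fintype ι] {m : ι → E} {H : ι → E →L[ℝ] E →L[ℝ] ℝ} {v a₀ : ℝ}

theorem tendsto_laplaceFactor_mul_integral (hm : Function.Injective m)
    (hV : Measurable V) (hmorse : ∀ k, HasMorseMinAt V (H k) (m k))
    (hmin : ∀ x, v ≤ V x) (hval : ∀ k, V (m k) = v)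
    (hsep : ∀ U, IsOpen U → (∀ k, m k ∈ U) → ∃ δ > 0, ∀ x ∉ U, v + δ ≤ V x)
    (ha₀ : 0 < a₀) (hint : Integrable (fun x => exp (-V x / a₀)) μ)
    (hf : Measurable f) (hM : ∀ x, |f x| ≤ M) (hfm : ∀ k, ContinuousAt f (m k)) :
    Tendsto (fun a => laplaceFactor (finrank ℝ E) v a * ∫ x, f x * exp (-V x / a) ∂μ)
      (𝓝[>] 0) (𝓝 (∑ k, f (m k) * ∫ y, exp (-(1 / 2) * H k y y) ∂μ)) := by
  choose κ hκ hquad using fun k => (hmorse k).exists_eventually_mul_norm_sq_le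
  obtain ⟨U, hU, hdisj⟩ := exists_pairwise_disjoint_isOpen_subset hm hquad
  choose hUo hmU hUκ using hU
  have hmeas : ∀ k, MeasurableSet (U k) := fun k => (hUo k).measurableSet
  have hmeasUnion : MeasurableSet (⋃ k, U k) := .iUnion hmeas
  obtain ⟨δ, hδ, hout⟩ := hsep (⋃ k, U k) (isOpen_iUnion hUo)
    fun k => Set.mem_iUnion_of_mem k (hmU k)
  have hnear : ∀ k, Tendsto
      (fun a => laplaceFactor (finrank ℝ E) v a * ∫ x in U k, f x * exp (-V x / a) ∂μ)
      (𝓝[>] 0) (𝓝 (f (m k) * ∫ y, exp (-(1 / 2) * H k y y) ∂μ)) := fun k => by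
    simpa only [hval] using (hmorse k).tendsto_laplaceFactor_mul_setIntegral μ (hmeas k)
      ((hUo k).mem_nhds (hmU k)) (hκ k) (hUκ k) hV hf hM (hfm k)
  have hfar := tendsto_laplaceFactor_mul_setIntegral_zero (finrank ℝ E)
    (lt_add_of_pos_right v hδ) hmeasUnion.compl (fun x _ => hM x) hout ha₀ hint.integrableOn
  have hsum := (tendsto_finsetSum Finset.univ fun k _ => hnear k).add hfar
  rw [add_zero] at hsum
  refine hsum.congr' ?_
  filter_upwards [Ioc_mem_nhdsGT ha₀] with a ⟨ha, haa₀⟩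
  have hinta := integrable_mul_exp_neg_div hV hf hM hmin ha haa₀ hint
  rw [← Finset.mul_sum, ← mul_add, ← integral_add_compl hmeasUnion hinta,
    integral_iUnion_fintype hmeas hdisj fun k => hinta.integrableOn]

theorem tendsto_gibbs_average [Nonempty ι] (hm : Function.Injective m)
    (hV : Measurable V) (hmorse : ∀ k, HasMorseMinAt V (H k) (m k))
    (hmin : ∀ x, v ≤ V x) (hval : ∀ k, V (m k) = v)
    (hsep : ∀ U, IsOpen U → (∀ k, m k ∈ U) → ∃ δ > 0, ∀ x ∉ U, v + δ ≤ V x)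
    (ha₀ : 0 < a₀) (hint : Integrable (fun x => exp (-V x / a₀)) μ)
    (hf : Measurable f) (hM : ∀ x, |f x| ≤ M) (hfm : ∀ k, ContinuousAt f (m k)) :
    Tendsto (fun a => (∫ x, f x * exp (-V x / a) ∂μ) / ∫ x, exp (-V x / a) ∂μ) (𝓝[>] 0)
      (𝓝 (∑ k, (∫ y, exp (-(1 / 2) * H k y y) ∂μ) /
        (∑ j, ∫ y, exp (-(1 / 2) * H j y y) ∂μ) * f (m k))) := by
  have hnum := tendsto_laplaceFactor_mul_integral μ hm hV hmorse hmin hval hsep ha₀ hint hf hM hfm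
  have hden := tendsto_laplaceFactor_mul_integral μ hm hV hmorse hmin hval hsep ha₀ hint
    (f := 1) (M := 1) measurable_const (by simp) fun _ => continuousAt_const
  simp only [Pi.one_apply, one_mul] at hden
  have hpos : 0 < ∑ j, ∫ y, exp (-(1 / 2) * H j y y) ∂μ :=
    Finset.sum_pos (fun j _ => (hmorse j).integral_pos μ) Finset.univ_nonempty
  simp_rw [div_mul_eq_mul_div, ← Finset.sum_div, mul_comm _ (f _)]
  refine (hnum.div hden hpos.ne').congr' ?_
  filter_upwards [self_mem_nhdsWithin] with a ha
  exact mul_div_mul_left _ _ (laplaceFactor_pos _ v ha).ne'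

end Laplace

section Hessian

open Matrix in
theorem fderiv_fderiv_apply_self {d : ℕ} (V : EuclideanSpace ℝ (Fin d) → ℝ)
    (m y : EuclideanSpace ℝ (Fin d)) :
    fderiv ℝ (fderiv ℝ V) m y y = y.ofLp ⬝ᵥ hessianMatrix V m *ᵥ y.ofLp := by
  have hmat : LinearMap.BilinForm.toMatrix (EuclideanSpace.basisFun (Fin d) ℝ).toBasis
      (fderiv ℝ (fderiv ℝ V) m).toBilinForm = hessianMatrix V m := by
    ext i j
    simp [hessianMatrix, LinearMap.BilinForm.toMatrix_apply]
  rw [← hmat]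
  exact LinearMap.BilinForm.apply_eq_dotProduct_toMatrix_mulVec
    (EuclideanSpace.basisFun (Fin d) ℝ).toBasis (fderiv ℝ (fderiv ℝ V) m).toBilinForm y y

theorem hasMorseMinAt_of_posDef {d : ℕ} {V : EuclideanSpace ℝ (Fin d) → ℝ}
    {m : EuclideanSpace ℝ (Fin d)} (hmin : IsLocalMin V m)
    (hV : ∀ᶠ x in 𝓝 m, DifferentiableAt ℝ V x) (hV' : DifferentiableAt ℝ (fderiv ℝ V) m)
    (hpos : (hessianMatrix V m).PosDef) :
    HasMorseMinAt V (fderiv ℝ (fderiv ℝ V) m) m := by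
  refine hasMorseMinAt_of_isLocalMin hmin hV hV' fun y hy => ?_
  rw [fderiv_fderiv_apply_self]
  exact hpos.dotProduct_mulVec_pos (by simpa using hy)

end Hessian

theorem hwang_gibbs_concentration_general {d : ℕ} {ι : Type*} [Fintype ι] [Nonempty ι]
    {V : EuclideanSpace ℝ (Fin d) → ℝ} (hV : LowerSemicontinuous V)
    {m : ι → EuclideanSpace ℝ (Fin d)} (hm : Function.Injective m)
    (hdiff : ∀ k, ∀ᶠ x in 𝓝 (m k), DifferentiableAt ℝ V x)
    (hdiff₂ : ∀ k, DifferentiableAt ℝ (fderiv ℝ V) (m k))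
    {v : ℝ} (hmin : ∀ x, v ≤ V x) (hval : ∀ k, V (m k) = v) (hexact : ∀ x, V x = v → ∃ k, x = m k)
    (hposdef : ∀ k, (hessianMatrix V (m k)).PosDef)
    (hliminf : ∃ c, v < c ∧ ∀ᶠ x in cocompact (EuclideanSpace ℝ (Fin d)), c ≤ V x)
    {a₀ : ℝ} (ha₀ : 0 < a₀) (hint : Integrable fun x => exp (-V x / a₀))
    {f : EuclideanSpace ℝ (Fin d) → ℝ} (hf : Measurable f) {M : ℝ} (hM : ∀ x, |f x| ≤ M)
    (hfm : ∀ k, ContinuousAt f (m k)) :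
    Tendsto (fun a => (∫ x, f x * exp (-V x / a)) / ∫ x, exp (-V x / a)) (𝓝[>] 0)
      (𝓝 (∑ k, (√(hessianMatrix V (m k)).det)⁻¹ /
        (∑ j, (√(hessianMatrix V (m j)).det)⁻¹) * f (m k))) := by
  obtain ⟨c, hc, hcV⟩ := hliminf
  have hmorse : ∀ k, HasMorseMinAt V (fderiv ℝ (fderiv ℝ V) (m k)) (m k) := fun k =>
    hasMorseMinAt_of_posDef (.of_forall fun x => hval k ▸ hmin x) (hdiff k) (hdiff₂ k) (hposdef k)
  have hsep : ∀ U, IsOpen U → (∀ k, m k ∈ U) → ∃ δ > 0, ∀ x ∉ U, v + δ ≤ V x := fun U hU hmU =>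
    exists_pos_add_le_of_lowerSemicontinuous hV hc hcV hU fun x hx =>
      (hmin x).lt_of_ne' fun hVx => by
        obtain ⟨k, rfl⟩ := hexact x hVx
        exact hx (hmU k)
  have hlim :=
    tendsto_gibbs_average volume hm hV.measurable hmorse hmin hval hsep ha₀ hint hf hM hfm
  have hconst : (2 * π) ^ (d / 2 : ℝ) ≠ 0 := by positivity
  simpa only [fderiv_fderiv_apply_self, integral_exp_neg_half_dotProduct_mulVec (hposdef _),
    ← Finset.sum_mul, Fintype.card_fin, mul_div_mul_right _ _ hconst] using hlim

/-- **Hwang's theorem on concentration of Gibbs measures at global minima.**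
Let `V : ℝ^d → ℝ` be `C²`, attaining its global minimum value `V*` exactly at the finitely
many points `m_1, …, m_ℓ`, at each of which the Hessian is positive definite.  Assume
`liminf_{|x|→∞} V(x) > V*` and `∫ e^{−V/a₀} dx < ∞` for some `a₀ > 0`.  Let `π_a` be the
Gibbs probability measure with density proportional to `e^{−V(x)/a}`.  Then as `a ↓ 0`,
`π_a` converges weakly to `∑_k w_k δ_{m_k}` with
`w_k = (det ∇²V(m_k))^{−1/2} / ∑_j (det ∇²V(m_j))^{−1/2}`. -/
theorem hwang_gibbs_concentration
    {d : ℕ} (V : EuclideanSpace ℝ (Fin d) → ℝ) (hV : ContDiff ℝ 2 V)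
    (ℓ : ℕ) (hℓ : 1 ≤ ℓ) (m : Fin ℓ → EuclideanSpace ℝ (Fin d))
    (hm_inj : Function.Injective m)
    (Vstar : ℝ) (hmin : ∀ x, Vstar ≤ V x) (hval : ∀ k, V (m k) = Vstar)
    (hexact : ∀ x, V x = Vstar → ∃ k, x = m k)
    (hposdef : ∀ k, (hessianMatrix V (m k)).PosDef)
    (hliminf : ∃ c : ℝ, Vstar < c ∧
      ∀ᶠ x in cocompact (EuclideanSpace ℝ (Fin d)), c ≤ V x)
    (a₀ : ℝ) (ha₀ : 0 < a₀)
    (hint : Integrable (fun x => Real.exp (-V x / a₀)) volume) :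
    ∀ f : EuclideanSpace ℝ (Fin d) →ᵇ ℝ,
      Tendsto
        (fun a : ℝ =>
          (∫ x, f x * Real.exp (-V x / a) ∂volume) / ∫ x, Real.exp (-V x / a) ∂volume)
        (𝓝[>] 0)
        (𝓝 (∑ k : Fin ℓ,
          ((Real.sqrt (hessianMatrix V (m k)).det)⁻¹ /
              ∑ j : Fin ℓ, (Real.sqrt (hessianMatrix V (m j)).det)⁻¹) * f (m k))) := by
  have : Nonempty (Fin ℓ) := ⟨⟨0, hℓ⟩⟩
  exact fun f => hwang_gibbs_concentration_general hV.continuous.lowerSemicontinuous hm_inj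
    (fun _ => .of_forall (hV.differentiable two_ne_zero))
    (fun k => (hV.fderiv_right one_add_one_eq_two.le).differentiable one_ne_zero (m k)) hmin hval
    hexact hposdef hliminf ha₀ hint f.continuous.measurable f.norm_coe_le_norm
    fun _ => f.continuous.continuousAt
end

section
/- Concentration of Gibbs measures on the set of global minima: Let V : ℝ^d → ℝ be continuous, attaining its global minimum value V* on a nonempty compact set M = argmin V. Assume lim inf_{|x|→∞} V(x) > V* and ∫_{ℝ^d} e^{−V(x)/a₀} dx < ∞ for some a₀ > 0. For a ∈ (0, a₀], let π_a be the probability measure with density proportional to e^{−V(x)/a}. Then for every open set U ⊇ M, π_a(U) → 1 as a ↓ 0. -/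
open MeasureTheory Filter Topology

/-!
Under the Gibbs measure `π_{a₀}`, which is finite, the Gibbs measure `π_a` has density proportional
to `e^{-tV}` with `t = a⁻¹ - a₀⁻¹`, and `t → ∞` as `a ↓ 0`. Given levels `l < u`, on `{u ≤ V}` this
density is at most `e^{-tu}`, while Chernoff's bound for `{V ≤ l}` bounds the normalising constant
below by `e^{-tl} π_{a₀}{V ≤ l}`. Hence `π_a{u ≤ V} = O(e^{-t(u - l)})`, so `π_a` concentrates on
every sublevel set `{V < u}` of positive volume. Compactness, together with the lower bound on `V`
near infinity, places a sublevel set strictly above the minimum inside any given neighbourhood of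
`argmin V`.
-/

open ProbabilityTheory Real

section Levels

variable {α : Type*} [TopologicalSpace α]

lemma exists_gt_measure_setOf_le_ne_zero [ConditionallyCompleteLinearOrder α] [OrderTopology α]
    [DenselyOrdered α] [NoMaxOrder α] [FirstCountableTopology α]
    {Ω : Type*} {mΩ : MeasurableSpace Ω} {μ : Measure Ω} {X : Ω → α} {l : α}
    (hl : μ {ω | l < X ω} ≠ 0) : ∃ u, l < u ∧ μ {ω | u ≤ X ω} ≠ 0 := by
  obtain ⟨v, -, hlv, hv⟩ := exists_seq_strictAnti_tendsto l
  have hunion : {ω | l < X ω} = ⋃ n, {ω | v n ≤ X ω} := by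
    change X ⁻¹' Set.Ioi l = ⋃ n, X ⁻¹' Set.Ici (v n)
    rw [← Set.preimage_iUnion, iUnion_Ici_eq_Ioi_of_lt_of_tendsto hlv hv]
  rw [hunion, ne_eq, measure_iUnion_null_iff, not_forall] at hl
  obtain ⟨n, hn⟩ := hl
  exact ⟨v n, hlv n, hn⟩

lemma exists_gt_setOf_lt_subset_of_isOpen [LinearOrder α] [ClosedIicTopology α] [NoMaxOrder α]
    {X : Type*} [TopologicalSpace X] {f : X → α} (hf : Continuous f) {m c : α} (hmc : m < c)
    (hc : ∀ᶠ x in cocompact X, c ≤ f x) {U : Set X} (hU : IsOpen U) (hmU : {x | f x ≤ m} ⊆ U) :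
    ∃ u, m < u ∧ {x | f x < u} ⊆ U := by
  obtain ⟨K, hK, hKc⟩ := mem_cocompact.1 hc
  obtain ⟨b, hmb, hb⟩ := (hK.diff hU).exists_forall_le' hf.continuousOn
    fun x hx ↦ not_le.1 fun hxm ↦ hx.2 (hmU hxm)
  refine ⟨min b c, lt_min hmb hmc, fun x (hx : f x < min b c) ↦ ?_⟩
  have hxK : x ∈ K := by
    by_contra hxK
    exact (hx.trans_le (min_le_right b c)).not_ge (hKc hxK)
  by_contra hxU
  exact (hx.trans_le (min_le_left b c)).not_ge (hb x ⟨hxK, hxU⟩)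

end Levels

section Tilted

variable {Ω : Type*} {mΩ : MeasurableSpace Ω} {μ : Measure Ω} {X : Ω → ℝ}

lemma tilted_real_apply {f : Ω → ℝ} {s : Set Ω} (hs : MeasurableSet s) :
    (μ.tilted f).real s = (∫ ω in s, exp (f ω) ∂μ) / ∫ ω, exp (f ω) ∂μ := by
  rw [measureReal_def, tilted_apply_eq_ofReal_integral' f hs, integral_div, ENNReal.toReal_ofReal]
  positivity

lemma tilted_mul_real_le [IsFiniteMeasure μ] {t : ℝ} (ht : 0 ≤ t) (l : ℝ) :
    (μ.tilted (t * X ·)).real {ω | X ω ≤ l} ≤ exp (t * l) / mgf X μ t * μ.real {ω | X ω ≤ l} := by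
  have hmgf : 0 ≤ mgf X μ t := mgf_nonneg
  rw [measureReal_def, tilted_mul_apply_mgf]
  refine ENNReal.toReal_le_of_le_ofReal (by positivity) ?_
  calc ∫⁻ ω in {ω | X ω ≤ l}, ENNReal.ofReal (exp (t * X ω) / mgf X μ t) ∂μ
    _ ≤ ∫⁻ _ in {ω | X ω ≤ l}, ENNReal.ofReal (exp (t * l) / mgf X μ t) ∂μ := by
      refine setLIntegral_mono measurable_const fun ω (hω : X ω ≤ l) ↦ ?_
      gcongr
    _ = ENNReal.ofReal (exp (t * l) / mgf X μ t * μ.real {ω | X ω ≤ l}) := by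
      rw [setLIntegral_const, ENNReal.ofReal_mul (by positivity), ofReal_measureReal]

lemma tilted_mul_real_le_mul_real_ge_le [IsFiniteMeasure μ] {t : ℝ} (ht : 0 ≤ t) (l u : ℝ) :
    (μ.tilted (t * X ·)).real {ω | X ω ≤ l} * μ.real {ω | u ≤ X ω} ≤
      exp (-((u - l) * t)) * μ.real {ω | X ω ≤ l} := by
  by_cases hint : Integrable (fun ω ↦ exp (t * X ω)) μ
  swap
  · rw [tilted_of_not_integrable hint, measureReal_zero_apply, zero_mul]
    positivity
  obtain rfl | hμ := eq_or_ne μ 0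
  · simp
  have hmgf : 0 < mgf X μ t := mgf_pos' hμ hint
  calc (μ.tilted (t * X ·)).real {ω | X ω ≤ l} * μ.real {ω | u ≤ X ω}
    _ ≤ (exp (t * l) / mgf X μ t * μ.real {ω | X ω ≤ l}) * (exp (-t * u) * mgf X μ t) := by
      gcongr
      · exact tilted_mul_real_le ht l
      · exact measure_ge_le_exp_mul_mgf u ht hint
    _ = exp (t * l) * exp (-t * u) * μ.real {ω | X ω ≤ l} := by field_simp
    _ = exp (-((u - l) * t)) * μ.real {ω | X ω ≤ l} := by
      rw [← exp_add]
      ring_nf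

lemma tendsto_tilted_mul_real_le_atTop [IsFiniteMeasure μ] {l : ℝ} (hl : μ {ω | l < X ω} ≠ 0) :
    Tendsto (fun t ↦ (μ.tilted (t * X ·)).real {ω | X ω ≤ l}) atTop (𝓝 0) := by
  obtain ⟨u, hlu, hu⟩ := exists_gt_measure_setOf_le_ne_zero hl
  have hu_pos : 0 < μ.real {ω | u ≤ X ω} := ENNReal.toReal_pos hu (measure_ne_top μ _)
  have hlim : Tendsto
      (fun t ↦ exp (-((u - l) * t)) * μ.real {ω | X ω ≤ l} / μ.real {ω | u ≤ X ω}) atTop (𝓝 0) := by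
    have hexp : Tendsto (fun t ↦ exp (-((u - l) * t))) atTop (𝓝 0) :=
      tendsto_exp_neg_atTop_nhds_zero.comp (tendsto_id.const_mul_atTop (sub_pos.2 hlu))
    simpa using (hexp.mul_const (μ.real {ω | X ω ≤ l})).div_const (μ.real {ω | u ≤ X ω})
  refine squeeze_zero' (.of_forall fun t ↦ measureReal_nonneg) ?_ hlim
  filter_upwards [eventually_ge_atTop 0] with t ht
  exact (le_div_iff₀ hu_pos).2 (tilted_mul_real_le_mul_real_ge_le ht l u)

lemma tendsto_tilted_mul_real_gt_atTop [IsFiniteMeasure μ]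
    (hint : ∀ᶠ t in atTop, Integrable (fun ω ↦ exp (t * X ω)) μ) {l : ℝ}
    (hl : μ {ω | l < X ω} ≠ 0) :
    Tendsto (fun t ↦ (μ.tilted (t * X ·)).real {ω | l < X ω}) atTop (𝓝 1) := by
  have : NeZero μ := ⟨by rintro rfl; exact hl rfl⟩
  rw [← sub_zero (1 : ℝ)]
  refine (tendsto_const_nhds.sub (tendsto_tilted_mul_real_le_atTop hl)).congr' ?_
  filter_upwards [hint, eventually_gt_atTop 0] with t hint_t ht
  have hX : AEMeasurable X μ := aemeasurable_of_aemeasurable_exp_mul ht.ne' hint_t.aemeasurable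
  have := isProbabilityMeasure_tilted hint_t
  have hmeas : NullMeasurableSet {ω | X ω ≤ l} (μ.tilted (t * X ·)) :=
    nullMeasurableSet_le (hX.mono_ac (tilted_absolutelyContinuous _ _)) aemeasurable_const
  rw [← probReal_compl_eq_one_sub₀ hmeas]
  simp only [Set.compl_ofPred, not_le]

end Tilted

section Gibbs

variable {Ω : Type*} {mΩ : MeasurableSpace Ω} {μ : Measure Ω} {V : Ω → ℝ} {a₀ : ℝ}

/-- The Gibbs measure `π_a` of the potential `V` at temperature `a`, relative to a reference measure
`μ`: the probability measure with `μ`-density proportional to `e^{-V/a}`. It is the zero measure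
when `e^{-V/a}` is not `μ`-integrable. -/
noncomputable def gibbsMeasure (μ : Measure Ω) (V : Ω → ℝ) (a : ℝ) : Measure Ω :=
  μ.tilted fun ω ↦ -V ω / a

lemma gibbsMeasure_real_apply {a : ℝ} {s : Set Ω} (hs : MeasurableSet s) :
    (gibbsMeasure μ V a).real s = (∫ ω in s, exp (-V ω / a) ∂μ) / ∫ ω, exp (-V ω / a) ∂μ :=
  tilted_real_apply hs

lemma gibbsMeasure_tilted_mul_neg (hint : Integrable (fun ω ↦ exp (-V ω / a₀)) μ) (a : ℝ) :
    (gibbsMeasure μ V a₀).tilted (fun ω ↦ (a⁻¹ - a₀⁻¹) * -V ω) = gibbsMeasure μ V a := by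
  rw [gibbsMeasure, tilted_tilted hint, gibbsMeasure]
  congr with ω
  simp only [Pi.add_apply]
  ring

lemma tendsto_gibbsMeasure_real_lt (ha₀ : a₀ ≠ 0)
    (hint : Integrable (fun ω ↦ exp (-V ω / a₀)) μ) {m : ℝ} (hm : ∀ᵐ ω ∂μ, m ≤ V ω) {u : ℝ}
    (hu : μ {ω | V ω < u} ≠ 0) :
    Tendsto (fun a ↦ (gibbsMeasure μ V a).real {ω | V ω < u}) (𝓝[>] 0) (𝓝 1) := by
  have : NeZero μ := ⟨by rintro rfl; exact hu rfl⟩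
  set ν := gibbsMeasure μ V a₀
  have : IsProbabilityMeasure ν := isProbabilityMeasure_tilted hint
  have hνμ : ν ≪ μ := tilted_absolutelyContinuous _ _
  have hμν : μ ≪ ν := absolutelyContinuous_tilted hint
  have hV : AEMeasurable (fun ω ↦ -V ω) ν := by
    refine (aemeasurable_of_aemeasurable_exp_mul (inv_ne_zero ha₀) ?_).mono_ac hνμ
    simpa only [div_eq_inv_mul] using hint.aemeasurable
  have hint_tilt : ∀ᶠ t in atTop, Integrable (fun ω ↦ exp (t * -V ω)) ν := by
    filter_upwards [eventually_ge_atTop 0] with t ht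
    refine integrable_exp_mul_of_le t (-m) ht hV ?_
    filter_upwards [hνμ.ae_le hm] with ω hω using neg_le_neg hω
  have hν : ν {ω | -u < -V ω} ≠ 0 := by
    simpa only [neg_lt_neg_iff] using fun h ↦ hu (hμν h)
  have htop : Tendsto (fun a : ℝ ↦ a⁻¹ - a₀⁻¹) (𝓝[>] 0) atTop :=
    tendsto_atTop_add_const_right _ (-a₀⁻¹) tendsto_inv_nhdsGT_zero
  simpa only [Function.comp_def, ν, gibbsMeasure_tilted_mul_neg hint, neg_lt_neg_iff] using
    (tendsto_tilted_mul_real_gt_atTop hint_tilt hν).comp htop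

end Gibbs

theorem gibbs_concentration_on_minima_general {X : Type*} [TopologicalSpace X] [MeasurableSpace X]
    [OpensMeasurableSpace X] {μ : Measure X} [μ.IsOpenPosMeasure] {V : X → ℝ} (hV : Continuous V)
    {x₁ : X} {c : ℝ} (hx₁ : V x₁ < c) (hc : ∀ᶠ x in cocompact X, c ≤ V x) {a₀ : ℝ} (ha₀ : a₀ ≠ 0)
    (hint : Integrable (fun x ↦ exp (-V x / a₀)) μ) {U : Set X} (hU : IsOpen U)
    (hMU : {x | ∀ y, V x ≤ V y} ⊆ U) :
    Tendsto (fun a ↦ (∫ x in U, exp (-V x / a) ∂μ) / ∫ x, exp (-V x / a) ∂μ) (𝓝[>] 0) (𝓝 1) := by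
  obtain ⟨x₀, hx₀⟩ := hV.exists_forall_le' x₁ (hc.mono fun x ↦ hx₁.le.trans)
  obtain ⟨u, hu, huU⟩ := exists_gt_setOf_lt_subset_of_isOpen hV ((hx₀ x₁).trans_lt hx₁) hc hU
    fun x hx ↦ hMU fun y ↦ le_trans hx (hx₀ y)
  have hpos : μ {x | V x < u} ≠ 0 := (isOpen_lt hV continuous_const).measure_ne_zero μ ⟨x₀, hu⟩
  simp only [← gibbsMeasure_real_apply hU.measurableSet]
  have hprob (a : ℝ) : IsZeroOrProbabilityMeasure (gibbsMeasure μ V a) :=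
    isZeroOrProbabilityMeasure_tilted
  exact tendsto_of_tendsto_of_tendsto_of_le_of_le
    (tendsto_gibbsMeasure_real_lt ha₀ hint (.of_forall hx₀) hpos) tendsto_const_nhds
    (fun a ↦ measureReal_mono huU) (fun a ↦ measureReal_le_one)

/-- **Concentration of Gibbs measures on the set of global minima.**
Let `V : ℝ^d → ℝ` be continuous, attaining its global minimum value `V*` on a nonempty
compact set `M = argmin V`.  Assume `liminf_{|x|→∞} V(x) > V*` and `∫ e^{−V/a₀} dx < ∞`
for some `a₀ > 0`.  Let `π_a` be the Gibbs probability measure with density proportional to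
`e^{−V(x)/a}`.  Then for every open `U ⊇ M`, `π_a(U) → 1` as `a ↓ 0`. -/
theorem gibbs_concentration_on_minima
    {d : ℕ} (V : EuclideanSpace ℝ (Fin d) → ℝ) (hV : Continuous V)
    (M : Set (EuclideanSpace ℝ (Fin d))) (hM : M = {x | ∀ y, V x ≤ V y})
    (hMne : M.Nonempty) (hMcpt : IsCompact M)
    (Vstar : ℝ) (hVstar : ∀ x ∈ M, V x = Vstar)
    (hliminf : ∃ c : ℝ, Vstar < c ∧
      ∀ᶠ x in cocompact (EuclideanSpace ℝ (Fin d)), c ≤ V x)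
    (a₀ : ℝ) (ha₀ : 0 < a₀)
    (hint : Integrable (fun x => Real.exp (-V x / a₀)) volume)
    (U : Set (EuclideanSpace ℝ (Fin d))) (hUopen : IsOpen U) (hMU : M ⊆ U) :
    Tendsto
      (fun a : ℝ =>
        (∫ x in U, Real.exp (-V x / a) ∂volume) / ∫ x, Real.exp (-V x / a) ∂volume)
      (𝓝[>] 0) (𝓝 1) := by
  obtain ⟨x₀, hx₀⟩ := hMne
  obtain ⟨c, hc, hVc⟩ := hliminf
  exact gibbs_concentration_on_minima_general hV ((hVstar x₀ hx₀).trans_lt hc) hVc ha₀.ne' hint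
    hUopen (hM ▸ hMU)
end

section
/- Quantitative bias bound for the single-sample stochastic perturbation gradient estimator: Let Φ : ℝ^d → ℝ be continuously differentiable with ∇Φ Lipschitz of constant L, and let ξ be an ℝ^d-valued random vector with E[ξ] = 0, E[ξ ξᵀ] = I, and E[‖ξ‖³] < ∞. Then for every x ∈ ℝ^d and every δ > 0, ‖(1/δ) E[Φ(x + δξ) ξ] − ∇Φ(x)‖ ≤ (L δ / 2) E[‖ξ‖³]. -/
open MeasureTheory

/- Taylor's formula at `x` splits `Φ (x + η) • η` into `Φ x • η`, which is centred, the linear part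
`⟪∇Φ x, η⟫ • η`, whose mean is the covariance of `η` applied to `∇Φ x`, and a remainder of norm at
most `L / 2 * ‖η‖ ^ 3`. The bias is the mean of the remainder for `η = δ ξ`, divided by `δ ^ 2`. -/

section Taylor

variable {E F : Type*} [NormedAddCommGroup E]

theorem norm_sub_sub_fderiv_le_of_norm_fderiv_sub_le [NormedSpace ℝ E] [NormedAddCommGroup F]
    [NormedSpace ℝ F] {f : E → F} (hf : Differentiable ℝ f) {L : ℝ} {x : E}
    (hL : ∀ u, ‖fderiv ℝ f u - fderiv ℝ f x‖ ≤ L * ‖u - x‖) (h : E) :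
    ‖f (x + h) - f x - fderiv ℝ f x h‖ ≤ L / 2 * ‖h‖ ^ 2 := by
  have hderiv (t : ℝ) : HasDerivAt (fun s : ℝ ↦ f (x + s • h) - f x - s • fderiv ℝ f x h)
      ((fderiv ℝ f (x + t • h) - fderiv ℝ f x) h) t := by
    have hline : HasDerivAt (fun s : ℝ ↦ x + s • h) h t := by
      simpa using ((hasDerivAt_id t).smul_const h).const_add x
    have hlin : HasDerivAt (fun s : ℝ ↦ s • fderiv ℝ f x h) (fderiv ℝ f x h) t := by
      simpa using (hasDerivAt_id t).smul_const (fderiv ℝ f x h)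
    exact (((hf _).hasFDerivAt.comp_hasDerivAt t hline).sub_const (f x)).sub hlin
  have hbound (t : ℝ) : HasDerivAt (fun s : ℝ ↦ L / 2 * ‖h‖ ^ 2 * s ^ 2) (L * ‖h‖ ^ 2 * t) t :=
    ((hasDerivAt_pow 2 t).const_mul (L / 2 * ‖h‖ ^ 2)).congr_deriv (by push_cast; ring)
  have hderiv_le (t : ℝ) (ht : 0 ≤ t) :
      ‖(fderiv ℝ f (x + t • h) - fderiv ℝ f x) h‖ ≤ L * ‖h‖ ^ 2 * t :=
    calc ‖(fderiv ℝ f (x + t • h) - fderiv ℝ f x) h‖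
        ≤ L * ‖x + t • h - x‖ * ‖h‖ := ContinuousLinearMap.le_of_opNorm_le _ (hL _) h
      _ = L * ‖h‖ ^ 2 * t := by
        rw [add_sub_cancel_left, norm_smul, Real.norm_of_nonneg ht]
        ring
  simpa using image_norm_le_of_norm_deriv_right_le_deriv_boundary (a := 0) (b := 1)
    (fun t _ ↦ (hderiv t).continuousAt.continuousWithinAt)
    (fun t _ ↦ (hderiv t).hasDerivWithinAt) (by simp) hbound
    (fun t ht ↦ hderiv_le t ht.1) (Set.right_mem_Icc.2 zero_le_one)

theorem norm_sub_sub_inner_gradient_le_of_norm_gradient_sub_le [InnerProductSpace ℝ E]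
    [CompleteSpace E] {f : E → ℝ} (hf : Differentiable ℝ f) {L : ℝ} {x : E}
    (hL : ∀ u, ‖gradient f u - gradient f x‖ ≤ L * ‖u - x‖) (h : E) :
    ‖f (x + h) - f x - inner ℝ (gradient f x) h‖ ≤ L / 2 * ‖h‖ ^ 2 := by
  rw [inner_gradient_left]
  refine norm_sub_sub_fderiv_le_of_norm_fderiv_sub_le hf (fun u ↦ ?_) h
  rw [← toDual_gradient, ← toDual_gradient, ← map_sub, LinearIsometryEquiv.norm_map]
  exact hL u

end Taylor

section Moments

variable {E Ω : Type*} [NormedAddCommGroup E] [InnerProductSpace ℝ E] {mΩ : MeasurableSpace Ω}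
  {P : Measure Ω} {ξ : Ω → E}

theorem integrable_inner_smul_self (hξ : MemLp ξ 2 P) (v : E) :
    Integrable (fun ω ↦ inner ℝ v (ξ ω) • ξ ω) P :=
  memLp_one_iff_integrable.1 (hξ.smul (hξ.const_inner v))

theorem integral_inner_smul_self_eq_of_orthonormal {ι : Type*} [Fintype ι] [DecidableEq ι]
    (b : OrthonormalBasis ι ℝ E) (hξ : MemLp ξ 2 P)
    (hcov : ∀ i j, ∫ ω, inner ℝ (b i) (ξ ω) * inner ℝ (b j) (ξ ω) ∂P = if i = j then 1 else 0)
    (v : E) :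
    ∫ ω, inner ℝ v (ξ ω) • ξ ω ∂P = v := by
  have := b.toBasis.finiteDimensional_of_finite
  have := FiniteDimensional.complete ℝ E
  refine InnerProductSpace.ext_inner_left_basis b.toBasis fun i ↦ ?_
  have hint (j : ι) : Integrable (fun ω ↦ inner ℝ (b j) (ξ ω) * inner ℝ (b i) (ξ ω)) P :=
    (hξ.const_inner (b j)).integrable_mul (hξ.const_inner (b i))
  have hexpand (ω : Ω) : inner ℝ (b i) (inner ℝ v (ξ ω) • ξ ω)
      = ∑ j, inner ℝ v (b j) * (inner ℝ (b j) (ξ ω) * inner ℝ (b i) (ξ ω)) := by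
    simp_rw [inner_smul_right, ← b.sum_inner_mul_inner v (ξ ω), Finset.sum_mul, mul_assoc]
  calc inner ℝ (b.toBasis i) (∫ ω, inner ℝ v (ξ ω) • ξ ω ∂P)
      = ∫ ω, inner ℝ (b i) (inner ℝ v (ξ ω) • ξ ω) ∂P := by
        rw [b.coe_toBasis, integral_inner (integrable_inner_smul_self hξ v)]
    _ = ∑ j, inner ℝ v (b j) * ∫ ω, inner ℝ (b j) (ξ ω) * inner ℝ (b i) (ξ ω) ∂P := by
        simp_rw [hexpand]
        rw [integral_finsetSum _ fun j _ ↦ (hint j).const_mul _]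
        simp_rw [integral_const_mul]
    _ = inner ℝ (b.toBasis i) v := by simp [hcov, real_inner_comm v]

end Moments

section Bias

variable {E Ω : Type*} [NormedAddCommGroup E] [InnerProductSpace ℝ E] [CompleteSpace E]
  {mΩ : MeasurableSpace Ω} {P : Measure Ω} [IsFiniteMeasure P] {Φ : E → ℝ} {L : ℝ} {x : E}

theorem norm_integral_smul_sub_integral_inner_gradient_smul_le (hΦ : Differentiable ℝ Φ)
    (hL : ∀ u, ‖gradient Φ u - gradient Φ x‖ ≤ L * ‖u - x‖) {η : Ω → E} (hη : MemLp η 3 P)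
    (hmean : ∫ ω, η ω ∂P = 0) :
    ‖∫ ω, Φ (x + η ω) • η ω ∂P - ∫ ω, inner ℝ (gradient Φ x) (η ω) • η ω ∂P‖
      ≤ L / 2 * ∫ ω, ‖η ω‖ ^ 3 ∂P := by
  let R (h : E) : ℝ := Φ (x + h) - Φ x - inner ℝ (gradient Φ x) h
  have hR_le (ω : Ω) : ‖R (η ω) • η ω‖ ≤ L / 2 * ‖η ω‖ ^ 3 :=
    calc ‖R (η ω) • η ω‖
        = ‖R (η ω)‖ * ‖η ω‖ := norm_smul _ _
      _ ≤ L / 2 * ‖η ω‖ ^ 2 * ‖η ω‖ := by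
        gcongr
        exact norm_sub_sub_inner_gradient_le_of_norm_gradient_sub_le hΦ hL (η ω)
      _ = L / 2 * ‖η ω‖ ^ 3 := by ring
  have hcube : Integrable (fun ω ↦ L / 2 * ‖η ω‖ ^ 3) P :=
    (hη.integrable_norm_pow three_ne_zero).const_mul _
  have hR_cont : Continuous R := by
    have := hΦ.continuous
    fun_prop
  have hR_int : Integrable (fun ω ↦ R (η ω) • η ω) P :=
    hcube.mono' ((hR_cont.comp_aestronglyMeasurable hη.1).smul hη.1) (ae_of_all P hR_le)
  have hconst_int : Integrable (fun ω ↦ Φ x • η ω) P :=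
    (hη.integrable (by norm_num)).smul (Φ x)
  have hlin_int : Integrable (fun ω ↦ inner ℝ (gradient Φ x) (η ω) • η ω) P :=
    integrable_inner_smul_self (hη.mono_exponent (by norm_num)) _
  have htaylor (ω : Ω) : Φ (x + η ω) • η ω
      = Φ x • η ω + inner ℝ (gradient Φ x) (η ω) • η ω + R (η ω) • η ω := by
    simp only [R, ← add_smul]
    congr 1
    ring
  have hsplit : ∫ ω, Φ (x + η ω) • η ω ∂P - ∫ ω, inner ℝ (gradient Φ x) (η ω) • η ω ∂P
      = ∫ ω, R (η ω) • η ω ∂P := by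
    simp_rw [htaylor]
    rw [integral_add (by exact hconst_int.add hlin_int) hR_int, integral_add hconst_int hlin_int,
      integral_smul, hmean, smul_zero, zero_add, add_sub_cancel_left]
  rw [hsplit, ← integral_const_mul]
  exact norm_integral_le_of_norm_le hcube (ae_of_all P hR_le)

theorem perturbation_gradient_estimator_bias_bound_general (hΦ : Differentiable ℝ Φ)
    (hL : ∀ u, ‖gradient Φ u - gradient Φ x‖ ≤ L * ‖u - x‖) {ξ : Ω → E} (hξ : MemLp ξ 3 P)
    (hmean : ∫ ω, ξ ω ∂P = 0) {δ : ℝ} (hδ : 0 < δ) :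
    ‖δ⁻¹ • ∫ ω, Φ (x + δ • ξ ω) • ξ ω ∂P - ∫ ω, inner ℝ (gradient Φ x) (ξ ω) • ξ ω ∂P‖
      ≤ L * δ / 2 * ∫ ω, ‖ξ ω‖ ^ 3 ∂P := by
  have hest : ∫ ω, Φ (x + δ • ξ ω) • (δ • ξ ω) ∂P = δ • ∫ ω, Φ (x + δ • ξ ω) • ξ ω ∂P := by
    simp_rw [← integral_smul, smul_smul, mul_comm]
  have hcov : ∫ ω, inner ℝ (gradient Φ x) (δ • ξ ω) • (δ • ξ ω) ∂P
      = δ ^ 2 • ∫ ω, inner ℝ (gradient Φ x) (ξ ω) • ξ ω ∂P := by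
    simp_rw [← integral_smul, inner_smul_right, smul_smul]
    congr! 3 with ω
    ring
  have hcube : ∫ ω, ‖δ • ξ ω‖ ^ 3 ∂P = δ ^ 3 * ∫ ω, ‖ξ ω‖ ^ 3 ∂P := by
    simp_rw [norm_smul, mul_pow, integral_const_mul, Real.norm_of_nonneg hδ.le]
  have hunscaled := norm_integral_smul_sub_integral_inner_gradient_smul_le hΦ hL
    (hξ.const_smul δ) (by simp [integral_smul, hmean])
  simp only [Pi.smul_apply, hest, hcov, hcube] at hunscaled
  calc ‖δ⁻¹ • ∫ ω, Φ (x + δ • ξ ω) • ξ ω ∂P - ∫ ω, inner ℝ (gradient Φ x) (ξ ω) • ξ ω ∂P‖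
      = (δ ^ 2)⁻¹ * ‖δ • ∫ ω, Φ (x + δ • ξ ω) • ξ ω ∂P
          - δ ^ 2 • ∫ ω, inner ℝ (gradient Φ x) (ξ ω) • ξ ω ∂P‖ := by
        rw [← Real.norm_of_nonneg (inv_nonneg.2 (sq_nonneg δ)), ← norm_smul, smul_sub,
          inv_smul_smul₀ (pow_ne_zero 2 hδ.ne'), smul_smul]
        congr 4
        field_simp
    _ ≤ (δ ^ 2)⁻¹ * (L / 2 * (δ ^ 3 * ∫ ω, ‖ξ ω‖ ^ 3 ∂P)) := by gcongr
    _ = L * δ / 2 * ∫ ω, ‖ξ ω‖ ^ 3 ∂P := by field_simp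

end Bias

/-- **Quantitative bias bound for the single-sample stochastic perturbation gradient
estimator.**  Let `Φ : ℝ^d → ℝ` be continuously differentiable with `L`-Lipschitz gradient,
and let `ξ` be a random vector with mean zero, identity covariance and finite third moment.
Then for every `x` and every `δ > 0`,
`‖(1/δ) E[Φ(x + δξ) ξ] − ∇Φ(x)‖ ≤ (L δ / 2) E[‖ξ‖³]`. -/
theorem perturbation_gradient_estimator_bias_bound
    {d : ℕ} (Φ : EuclideanSpace ℝ (Fin d) → ℝ) (hΦ : ContDiff ℝ 1 Φ)
    (L : ℝ) (hL : 0 ≤ L)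
    (hLip : ∀ u v : EuclideanSpace ℝ (Fin d),
      ‖gradient Φ u - gradient Φ v‖ ≤ L * ‖u - v‖)
    {Ω : Type*} {mΩ : MeasurableSpace Ω} (P : Measure Ω) [IsProbabilityMeasure P]
    (ξ : Ω → EuclideanSpace ℝ (Fin d)) (hξmeas : Measurable ξ)
    (hmom : Integrable (fun ω => ‖ξ ω‖ ^ 3) P)
    (hmean : (∫ ω, ξ ω ∂P) = 0)
    (hcov : ∀ i j : Fin d, (∫ ω, ξ ω i * ξ ω j ∂P) = if i = j then 1 else 0)
    (x : EuclideanSpace ℝ (Fin d)) (δ : ℝ) (hδ : 0 < δ) :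
    ‖(δ⁻¹ • ∫ ω, Φ (x + δ • ξ ω) • ξ ω ∂P) - gradient Φ x‖
      ≤ L * δ / 2 * ∫ ω, ‖ξ ω‖ ^ 3 ∂P := by
  have hξ : MemLp ξ 3 P :=
    (integrable_norm_rpow_iff hξmeas.aestronglyMeasurable three_ne_zero ENNReal.ofNat_ne_top).1
      (by simpa using hmom)
  have hcov_gradient : ∫ ω, inner ℝ (gradient Φ x) (ξ ω) • ξ ω ∂P = gradient Φ x :=
    integral_inner_smul_self_eq_of_orthonormal (EuclideanSpace.basisFun (Fin d) ℝ)
      (hξ.mono_exponent (by norm_num)) (by simpa [EuclideanSpace.inner_single_left] using hcov) _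
  simpa only [hcov_gradient] using perturbation_gradient_estimator_bias_bound_general
    (hΦ.differentiable one_ne_zero) (hLip · x) hξ hmean hδ
end
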